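/- arXiv:math/0112243 — 2 statements merged into one kernel-verified Lean document; each statement's English description precedes it below -/
import Mathlib

section
/- Let T be a k-algebra with separable subalgebra R = k^n spanned by a complete orthogonal idempotent system, and let X be a T-bimodule. Then the Hochschild cohomology HH^*(T, X) is computed by the relative complex 0 → X^R → Hom_{R-R}(T, X) → ... → Hom_{R-R}(T^{⊗_R l}, X) → ..., with the usual Hochschild coboundary. In particular, in degree 0 it computes X^T = {x ∈ X : tx = xt for all t ∈ T}. -/
/-!
Averaging over the idempotents,
`(P f)(t₁, …, t_l) = ∑ e_{I 0} · f(e_{I 0} t₁ e_{I 1}, …, e_{I (l-1)} t_l e_{I l}) · e_{I l}`,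
is a chain endomorphism of the full Hochschild complex (`BiAct.P_d'`). It is the identity on the
relative complex (`BiAct.P_self'`) and is chain homotopic to the identity (`BiAct.homotopy`). If
its values were always relative cochains, the two complexes would be homotopy equivalent.

The right action of `k` on `X` is not assumed to agree with the left one, so `P f` is relative only
when the two agree on the values of `f` (`BiAct.P_rel`). This is automatic when `f` and `δ f` are
both multilinear (`BiAct.central_of_multi`): among the terms of `δ f (v, c)`, only `f v · c` could
fail to be linear in `c`. It therefore applies to a multilinear cocycle `f`, for which `P f` is the
relative representative, and to a multilinear `h` with `δ h = g` relative, for which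
`g = P g = P (δ h) = δ (P h)`.

The identities `P δ = δ P` and `δ H + H δ = P - 1` are proved by induction on the degree, for all
coefficients at once. Moving the first argument of `f` into the coefficients gives a cochain
`cur f` in `T → X`, where `(t · φ) a = φ (a t)` and `(φ · t) a = φ a · t`, and
`δ f (a, v) = a · f v - δ (cur f) v a` (`BiAct.d_cons`). Similar recursions hold for `P` and define
`H`. On all functions `T → X` the left action is not additive in `T`, so coefficients are pairs of
commuting actions (`BiAct`) and additivity is only required on the values of cochains
(`BiAct.Adm`). The induction needs `X` and `T → X` in one universe; the general case follows by
passing to `ULift X`.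
-/

open MulOpposite

/-- Multilinearity over `k`. -/
def IsMultilinear (k : Type*) [CommSemiring k] {ι : Type*} [DecidableEq ι]
    {N : ι → Type*} [∀ i, AddCommMonoid (N i)] [∀ i, Module k (N i)]
    {W : Type*} [AddCommMonoid W] [Module k W]
    (f : (∀ i, N i) → W) : Prop :=
  (∀ (v : ∀ i, N i) (i : ι) (x y : N i),
      f (Function.update v i (x + y)) =
        f (Function.update v i x) + f (Function.update v i y)) ∧
  (∀ (v : ∀ i, N i) (i : ι) (c : k) (x : N i),
      f (Function.update v i (c • x)) = c • f (Function.update v i x))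

/-- `R`-balancedness. -/
def IsBalanced {T W : Type*} [Ring T] [AddCommMonoid W] (R : Set T) {m : ℕ}
    (f : (Fin m → T) → W) : Prop :=
  ∀ (v : Fin m → T) (s : ℕ) (hs : s + 1 < m), ∀ r ∈ R,
    f (Function.update v ⟨s, by omega⟩ (v ⟨s, by omega⟩ * r)) =
    f (Function.update v ⟨s + 1, hs⟩ (r * v ⟨s + 1, hs⟩))

/-- Multiply entries `i` and `i+1` of a tuple. -/
def merge {T : Type*} [Mul T] {m : ℕ} (v : Fin (m + 1) → T) (i : Fin m) :
    Fin m → T := fun s =>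
  if s.1 < i.1 then v s.castSucc
  else if s.1 = i.1 then v s.castSucc * v s.succ
  else v s.succ

/-- The Hochschild coboundary, on cochains encoded as functions on tuples. -/
def hochδ {T X : Type*} [Ring T] [AddCommGroup X]
    [Module T X] [Module Tᵐᵒᵖ X] {l : ℕ}
    (f : (Fin l → T) → X) : (Fin (l + 1) → T) → X := fun v =>
  v 0 • f (Fin.tail v) +
    (∑ i : Fin l, ((-1 : ℤ) ^ (i.1 + 1)) • f (merge v i)) +
    ((-1 : ℤ) ^ (l + 1)) • (op (v (Fin.last l)) • f (Fin.init v))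

/-- The conditions defining the degree-`l` term `Hom_{R-R}(T^{⊗_R l}, X)` of the
relative Hochschild complex: `k`-multilinear, `R`-balanced, commuting with the
outer `R`-actions; in degree `0` the term is `X^R`. -/
def RelCochain (k : Type*) [CommSemiring k] {T X : Type*} [Ring T] [Algebra k T]
    [AddCommGroup X] [Module k X] [Module T X] [Module Tᵐᵒᵖ X]
    (R : Set T) {l : ℕ} (f : (Fin l → T) → X) : Prop :=
  IsMultilinear k f ∧ IsBalanced R f ∧
  (∀ h : 0 < l, ∀ r ∈ R, ∀ v : Fin l → T,
      f (Function.update v ⟨0, h⟩ (r * v ⟨0, h⟩)) = r • f v ∧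
      f (Function.update v ⟨l - 1, by omega⟩ (v ⟨l - 1, by omega⟩ * r)) =
        op r • f v) ∧
  (l = 0 → ∀ r ∈ R, ∀ v : Fin l → T, r • f v = op r • f v)

universe u w w'

/-- A left and a right action of the ring `T` on an abelian group `X` which commute with each
other. The left action is not required to be additive in `T`, because it is not on `T → X` (see
`BiAct.shift`). -/
structure BiAct (T : Type u) [Ring T] (X : Type w) [AddCommGroup X] where
  l : T → X →+ X
  r : T → X →+ X
  l_one : ∀ x, l 1 x = x
  l_mul : ∀ s t x, l (s * t) x = l s (l t x)
  r_one : ∀ x, r 1 x = x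
  r_mul : ∀ s t x, r (s * t) x = r t (r s x)
  r_add : ∀ s t x, r (s + t) x = r s x + r t x
  lr : ∀ s t x, l s (r t x) = r t (l s x)

namespace BiAct

/-! ### Coboundary, averaging and admissible cochains -/

section
variable {T : Type u} [Ring T] {X : Type w} [AddCommGroup X] {Y : Type w'} [AddCommGroup Y]

/-- The functions `T → X`, with `(t · φ) a = φ (a t)` and `(φ · t) a = φ a · t`. -/
def shift (B : BiAct T X) : BiAct T (T → X) where
  l t :=
    { toFun := fun φ a => φ (a * t)
      map_zero' := rfl
      map_add' := fun _ _ => rfl }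
  r t :=
    { toFun := fun φ a => B.r t (φ a)
      map_zero' := by funext a; simp
      map_add' := fun _ _ => by funext a; simp }
  l_one φ := by funext a; simp
  l_mul s t φ := by funext a; simp [mul_assoc]
  r_one φ := by funext a; simp [B.r_one]
  r_mul s t φ := by funext a; simp [B.r_mul]
  r_add s t φ := by funext a; simp [B.r_add]
  lr s t φ := rfl

@[simp] lemma shift_l (B : BiAct T X) (t : T) (φ : T → X) (a : T) :
    B.shift.l t φ a = φ (a * t) := rfl

@[simp] lemma shift_r (B : BiAct T X) (t : T) (φ : T → X) (a : T) :
    B.shift.r t φ a = B.r t (φ a) := rfl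

/-- The additive map `φ` commutes with both actions. -/
structure IsHom (B : BiAct T X) (B' : BiAct T Y) (φ : X →+ Y) : Prop where
  l : ∀ t x, φ (B.l t x) = B'.l t (φ x)
  r : ∀ t x, φ (B.r t x) = B'.r t (φ x)

/-- The map `x ↦ (a ↦ a · x)` from `X` to `T → X`. -/
def orbit (B : BiAct T X) : X →+ (T → X) where
  toFun x a := B.l a x
  map_zero' := by funext a; simp
  map_add' _ _ := by funext a; simp

@[simp] lemma orbit_apply (B : BiAct T X) (x : X) (a : T) : B.orbit x a = B.l a x := rfl

lemma orbit_isHom (B : BiAct T X) : IsHom B B.shift B.orbit where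
  l t x := by funext a; simp [B.l_mul]
  r t x := by funext a; simp [B.lr]

/-- Postcomposition with `φ`, as a map `(T → X) → (T → Y)`. -/
def post (T : Type u) (φ : X →+ Y) : (T → X) →+ (T → Y) where
  toFun F a := φ (F a)
  map_zero' := by funext a; simp
  map_add' _ _ := by funext a; simp

@[simp] lemma post_apply (φ : X →+ Y) (F : T → X) (a : T) : post T φ F a = φ (F a) := rfl

lemma IsHom.post {B : BiAct T X} {B' : BiAct T Y} {φ : X →+ Y} (h : IsHom B B' φ) :
    IsHom B.shift B'.shift (BiAct.post T φ) where
  l t x := rfl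
  r t x := by funext a; simp [h.r]

/-- The first argument of a cochain, moved into the coefficients: an `(l+1)`-cochain in `X`
becomes an `l`-cochain in `T → X`. -/
def cur {l : ℕ} (f : (Fin (l + 1) → T) → X) : (Fin l → T) → (T → X) :=
  fun v a => f (Fin.cons a v)

/-- The Hochschild coboundary for the actions `B`. -/
def d (B : BiAct T X) {l : ℕ} (f : (Fin l → T) → X) : (Fin (l + 1) → T) → X := fun v =>
  B.l (v 0) (f (Fin.tail v)) +
    (∑ i : Fin l, ((-1 : ℤ) ^ (i.1 + 1)) • f (merge v i)) +
    ((-1 : ℤ) ^ (l + 1)) • (B.r (v (Fin.last l)) (f (Fin.init v)))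

lemma exists_cons {l : ℕ} (v : Fin (l + 1) → T) : ∃ a u, v = Fin.cons a u :=
  ⟨v 0, Fin.tail v, (Fin.cons_self_tail v).symm⟩

lemma update_cons_zero {l : ℕ} (a t : T) (v : Fin l → T) :
    Function.update (Fin.cons a v : Fin (l + 1) → T) 0 t = Fin.cons t v :=
  Fin.update_cons_zero (α := fun _ => T) a v t

lemma update_snoc_last {l : ℕ} (a t : T) (v : Fin l → T) :
    Function.update (Fin.snoc v a : Fin (l + 1) → T) (Fin.last l) t = Fin.snoc v t :=
  Fin.update_snoc_last (α := fun _ => T) a v t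

lemma d_nat {B : BiAct T X} {B' : BiAct T Y} {φ : X →+ Y} (h : IsHom B B' φ) {l : ℕ}
    (f : (Fin l → T) → X) (v : Fin (l + 1) → T) :
    B'.d (fun w => φ (f w)) v = φ (B.d f v) := by
  simp [d, h.l, h.r]

lemma d_zero (B : BiAct T X) (f : (Fin 0 → T) → X) (a : T) (v : Fin 0 → T) :
    B.d f (Fin.cons a v) = B.l a (f v) - B.r a (f v) := by
  simp [d, sub_eq_add_neg, Subsingleton.elim (Fin.tail (Fin.cons a v : Fin 1 → T)) v,
    Subsingleton.elim (Fin.init (Fin.cons a v : Fin 1 → T)) v]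

lemma merge_cons_zero {l : ℕ} (a : T) (v : Fin (l + 1) → T) :
    merge (Fin.cons a v : Fin (l + 2) → T) 0 = Fin.cons (a * v 0) (Fin.tail v) := by
  funext s
  refine Fin.cases ?_ (fun j => ?_) s
  · simp [merge]
  · simp [merge, Fin.tail]

lemma merge_cons_succ {l : ℕ} (a : T) (v : Fin (l + 1) → T) (j : Fin l) :
    merge (Fin.cons a v : Fin (l + 2) → T) j.succ = Fin.cons a (merge v j) := by
  funext s
  refine Fin.cases ?_ (fun i => ?_) s
  · simp [merge]
  · simp [merge]

lemma init_cons {l : ℕ} (a : T) (v : Fin (l + 1) → T) :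
    Fin.init (Fin.cons a v : Fin (l + 2) → T) = Fin.cons a (Fin.init v) := by
  funext s
  refine Fin.cases ?_ (fun i => ?_) s
  · simp [Fin.init]
  · simp [Fin.init]

/-- In terms of `cur`, the coboundary satisfies `δf(a, v) = a · f(v) - δ(cur f)(v)(a)`. -/
lemma d_cons (B : BiAct T X) {l : ℕ} (f : (Fin (l + 1) → T) → X) (a : T) (v : Fin (l + 1) → T) :
    B.d f (Fin.cons a v) = B.l a (f v) - B.shift.d (cur f) v a := by
  have h1 : (Fin.last (l + 1)) = (Fin.last l).succ := rfl
  simp only [d, Fin.cons_zero, Fin.tail_cons, Fin.sum_univ_succ, merge_cons_zero, merge_cons_succ,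
    init_cons, h1, Fin.cons_succ, Pi.add_apply, Finset.sum_apply, Pi.smul_apply, shift_l, shift_r,
    cur, Fin.val_succ, Fin.val_zero]
  simp only [pow_succ _ (_ + 1), mul_neg_one, neg_smul, Finset.sum_neg_distrib]
  simp
  abel

lemma cur_d (B : BiAct T X) {l : ℕ} (f : (Fin (l + 1) → T) → X) :
    cur (B.d f) = fun v => B.orbit (f v) - B.shift.d (cur f) v := by
  funext v a
  simp [cur, d_cons, Pi.sub_apply]

/-- Averaging over the idempotents:
`(P f)(t₁, …, t_l) = ∑ e_{I 0} · f(e_{I 0} t₁ e_{I 1}, …, e_{I (l-1)} t_l e_{I l}) · e_{I l}`. -/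
def P {n : ℕ} (e : Fin n → T) (B : BiAct T X) {l : ℕ} (f : (Fin l → T) → X) :
    (Fin l → T) → X := fun v =>
  ∑ I : Fin (l + 1) → Fin n,
    B.l (e (I 0)) (B.r (e (I (Fin.last l))) (f fun s => e (I s.castSucc) * v s * e (I s.succ)))

variable {n : ℕ} (e : Fin n → T)

lemma P_nat {B : BiAct T X} {B' : BiAct T Y} {φ : X →+ Y} (h : IsHom B B' φ) {l : ℕ}
    (f : (Fin l → T) → X) (v : Fin l → T) :
    P e B' (fun w => φ (f w)) v = φ (P e B f v) := by
  simp [P, h.l, h.r]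

lemma P_sub (B : BiAct T X) {l : ℕ} (f g : (Fin l → T) → X) (v : Fin l → T) :
    P e B (fun w => f w - g w) v = P e B f v - P e B g v := by
  simp [P]

lemma P_zero (B : BiAct T X) (f : (Fin 0 → T) → X) (v : Fin 0 → T) :
    P e B f v = ∑ i, B.l (e i) (B.r (e i) (f v)) := by
  rw [P, ← (Equiv.funUnique (Fin 1) (Fin n)).symm.sum_comp]
  refine Finset.sum_congr rfl fun i _ => ?_
  exact congrArg (fun w => B.l (e i) (B.r (e i) (f w))) (Subsingleton.elim _ _)

lemma P_cons (B : BiAct T X) {l : ℕ} (f : (Fin (l + 1) → T) → X) (a : T) (v : Fin l → T) :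
    P e B f (Fin.cons a v) = ∑ i, B.l (e i) (P e B.shift (cur f) v (e i * a)) := by
  rw [P, ← (Fin.consEquiv (fun _ => Fin n)).sum_comp, Fintype.sum_prod_type]
  refine Finset.sum_congr rfl fun i _ => ?_
  simp only [P, Finset.sum_apply, map_sum, shift_l, shift_r, cur]
  refine Finset.sum_congr rfl fun I _ => ?_
  simp only [Fin.consEquiv_apply, Fin.cons_zero]
  congr 2
  congr 1
  funext s
  refine Fin.cases ?_ (fun j => ?_) s
  · simp
  · simp

/-- A subgroup stable under both actions. -/
structure Stable (B : BiAct T X) (S : AddSubgroup X) : Prop where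
  l : ∀ t x, x ∈ S → B.l t x ∈ S
  r : ∀ t x, x ∈ S → B.r t x ∈ S

lemma P_mem {B : BiAct T X} {S : AddSubgroup X} (hS : Stable B S) {l : ℕ}
    {f : (Fin l → T) → X} (hf : ∀ v, f v ∈ S) (v : Fin l → T) : P e B f v ∈ S :=
  S.sum_mem fun _ _ => hS.l _ _ (hS.r _ _ (hf _))

/-- The functions `T → X` with values in `S`. -/
def shiftS (T : Type u) (S : AddSubgroup X) : AddSubgroup (T → X) where
  carrier := {φ | ∀ a, φ a ∈ S}
  zero_mem' _ := S.zero_mem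
  add_mem' h h' a := S.add_mem (h a) (h' a)
  neg_mem' h a := S.neg_mem (h a)

lemma Stable.shift {B : BiAct T X} {S : AddSubgroup X} (hS : Stable B S) :
    Stable B.shift (shiftS T S) where
  l _ _ h _ := h _
  r _ _ h a := hS.r _ _ (h a)

/-- The elements on which the left action is additive in `T`. -/
def addS (B : BiAct T X) : AddSubgroup X where
  carrier := {x | ∀ s t, B.l (s + t) x = B.l s x + B.l t x}
  zero_mem' := by simp
  add_mem' h h' s t := by simp only [map_add, h s t, h' s t]; abel
  neg_mem' h s t := by simp only [map_neg, h s t]; abel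

lemma addS_stable (B : BiAct T X) : Stable B B.addS where
  l t x h s s' := by simp only [← B.l_mul, add_mul, h (s * t) (s' * t)]
  r t x h s s' := by simp only [B.lr, h s s', map_add]

/-- The `l`-cochains additive in every argument, on whose values the left action is additive. -/
structure Adm (B : BiAct T X) {l : ℕ} (f : (Fin l → T) → X) : Prop where
  mem : ∀ v, f v ∈ B.addS
  add : ∀ (v : Fin l → T) i x y,
    f (Function.update v i (x + y)) = f (Function.update v i x) + f (Function.update v i y)

lemma Adm.cons_add {B : BiAct T X} {l : ℕ} {f : (Fin (l + 1) → T) → X} (hf : Adm B f)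
    (v : Fin l → T) (x y : T) : f (Fin.cons (x + y) v) = f (Fin.cons x v) + f (Fin.cons y v) := by
  simpa using hf.add (Fin.cons 0 v) 0 x y

lemma Adm.cur {B : BiAct T X} {l : ℕ} {f : (Fin (l + 1) → T) → X} (hf : Adm B f) :
    Adm B.shift (cur f) where
  mem v s t := by
    funext a
    simp only [shift_l, Pi.add_apply, BiAct.cur, mul_add, hf.cons_add]
  add v i x y := by
    funext a
    simp only [BiAct.cur, Fin.cons_update, hf.add, Pi.add_apply]

lemma addS_sum {B : BiAct T X} {x : X} (hx : x ∈ B.addS) (g : Fin n → T) :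
    B.l (∑ i, g i) x = ∑ i, B.l (g i) x :=
  map_sum (AddMonoidHom.mk' (fun t => B.l t x) hx) g _

lemma r_sum (B : BiAct T X) (x : X) (g : Fin n → T) :
    B.r (∑ i, g i) x = ∑ i, B.r (g i) x :=
  map_sum (AddMonoidHom.mk' (fun t => B.r t x) (fun s t => B.r_add s t x)) g _

/-- The map `φ ↦ (a ↦ ∑ e_i · φ (e_i a))` on `T → X`. -/
def Q (B : BiAct T X) : (T → X) →+ (T → X) where
  toFun φ a := ∑ i, B.l (e i) (φ (e i * a))
  map_zero' := by funext a; simp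
  map_add' _ _ := by funext a; simp [Finset.sum_add_distrib]

lemma Q_isHom (B : BiAct T X) : IsHom B.shift B.shift (Q e B) where
  l t φ := by funext a; simp [Q, mul_assoc]
  r t φ := by funext a; simp [Q, B.lr]

lemma cur_P (B : BiAct T X) {l : ℕ} (f : (Fin (l + 1) → T) → X) :
    cur (P e B f) = fun v => Q e B (P e B.shift (cur f) v) := by
  funext v a
  exact P_cons e B f a v

end

/-! ### The averaging map is a chain map homotopic to the identity -/

section
variable {T : Type u} [Ring T] {n : ℕ} (e : Fin n → T)

/-- `P` commutes with the coboundary; induction on the degree over all coefficients at once. The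
universe of `X` is chosen so that it also contains `T → X`. -/
theorem P_d (hid : ∀ i, e i * e i = e i) (hsum : ∑ i, e i = 1) : ∀ (l : ℕ)
    {X : Type (max u w)} [AddCommGroup X] (B : BiAct T X) (f : (Fin l → T) → X), Adm B f →
    ∀ v, P e B (B.d f) v = B.d (P e B f) v := by
  intro l
  induction l with
  | zero =>
    intro X _ B f hf v
    obtain ⟨a, v, rfl⟩ := exists_cons v
    have h0 : ∀ j, cur (B.d f) v j = B.l j (f v) - B.r j (f v) := fun j => d_zero B f j v
    simp only [P_cons, P_zero, d_zero, Finset.sum_apply, shift_l, shift_r, h0, map_sum]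
    have h1 : ∀ i j, B.l (e i) (B.r (e j) (B.l (e i * a * e j) (f v) - B.r (e i * a * e j) (f v)))
        = B.l (e i * a * e j) (B.r (e j) (f v)) - B.r (e i * a * e j) (B.l (e i) (f v)) := by
      intro i j
      rw [map_sub, map_sub, ← B.lr (e i * a * e j), ← B.l_mul, ← B.r_mul, B.lr]
      simp only [← mul_assoc, hid, mul_assoc _ (e j) (e j), B.lr]
    simp only [h1, Finset.sum_sub_distrib]
    congr 1
    · rw [Finset.sum_comm]
      refine Finset.sum_congr rfl fun j _ => ?_
      rw [← addS_sum (B.addS_stable.r _ _ (hf.mem v)), ← Finset.sum_mul, ← Finset.sum_mul, hsum,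
        one_mul, B.l_mul]
    · refine Finset.sum_congr rfl fun j _ => ?_
      rw [← r_sum, ← Finset.mul_sum, hsum, mul_one, B.r_mul, ← B.lr]
  | succ l ih =>
    intro X _ B f hf v
    obtain ⟨a, v, rfl⟩ := exists_cons v
    rw [P_cons, d_cons, cur_d, cur_P, d_nat (Q_isHom e B)]
    simp only [P_sub, P_nat e B.orbit_isHom, ih B.shift (cur f) hf.cur, Pi.sub_apply, map_sub,
      Finset.sum_sub_distrib, orbit_apply]
    congr 1
    simp only [← B.l_mul, ← mul_assoc, hid]
    rw [← addS_sum (P_mem e B.addS_stable hf.mem v), ← Finset.sum_mul, hsum, one_mul]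

/-- The homotopy from the identity to `P`: explicitly, `H f (t₁, …, t_l)` is the sum over `s` and
`I` of `(-1)^s f(t₁, …, t_s, e_{I s}, e_{I s} t_{s+1} e_{I (s+1)}, …, e_{I (l-1)} t_l e_{I l}) ·
e_{I l}`. The recursion separates the term `s = 0`, which is `P` applied to `cur f` and evaluated
at `1`, from the others. -/
def H : (l : ℕ) → {X : Type (max u w)} → [AddCommGroup X] → BiAct T X →
    ((Fin (l + 1) → T) → X) → (Fin l → T) → X
  | 0, _, _, B, f => fun v => P e B.shift (cur f) v 1
  | l + 1, _, _, B, f => fun v => P e B.shift (cur f) v 1 - H l B.shift (cur f) (Fin.tail v) (v 0)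

lemma H_cons (l : ℕ) {X : Type (max u w)} [AddCommGroup X] (B : BiAct T X)
    (f : (Fin (l + 2) → T) → X) (a : T) (v : Fin l → T) :
    H.{u, w} e (l + 1) B f (Fin.cons a v) =
      P e B.shift (cur f) (Fin.cons a v) 1 - H.{u, w} e l B.shift (cur f) v a := rfl

lemma H_nat : ∀ (l : ℕ) {X Y : Type (max u w)} [AddCommGroup X] [AddCommGroup Y]
    {B : BiAct T X} {B' : BiAct T Y} {φ : X →+ Y} (_ : IsHom B B' φ)
    (f : (Fin (l + 1) → T) → X) (v : Fin l → T),
    H.{u, w} e l B' (fun w => φ (f w)) v = φ (H.{u, w} e l B f v) := by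
  intro l
  induction l with
  | zero =>
    intro X Y _ _ B B' φ h f v
    exact congrFun (P_nat e h.post (cur f) v) 1
  | succ l ih =>
    intro X Y _ _ B B' φ h f v
    simp only [H, map_sub]
    exact congrArg₂ _ (congrFun (P_nat e h.post (cur f) v) 1)
      (congrFun (ih h.post (cur f) (Fin.tail v)) (v 0))

lemma H_sub : ∀ (l : ℕ) {X : Type (max u w)} [AddCommGroup X] (B : BiAct T X)
    (f g : (Fin (l + 1) → T) → X) (v : Fin l → T),
    H.{u, w} e l B (fun w => f w - g w) v = H.{u, w} e l B f v - H.{u, w} e l B g v := by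
  intro l
  induction l with
  | zero =>
    intro X _ B f g v
    exact congrFun (P_sub e B.shift (cur f) (cur g) v) 1
  | succ l ih =>
    intro X _ B f g v
    have h1 := congrFun (P_sub e B.shift (cur f) (cur g) v) 1
    have h2 := congrFun (ih B.shift (cur f) (cur g) (Fin.tail v)) (v 0)
    simp only [H]
    refine (congrArg₂ _ h1 h2).trans ?_
    simp only [Pi.sub_apply]
    abel

lemma H_mem : ∀ (l : ℕ) {X : Type (max u w)} [AddCommGroup X] {B : BiAct T X}
    {S : AddSubgroup X} (_ : Stable B S) {f : (Fin (l + 1) → T) → X} (_ : ∀ v, f v ∈ S)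
    (v : Fin l → T), H.{u, w} e l B f v ∈ S := by
  intro l
  induction l with
  | zero =>
    intro X _ B S hS f hf v
    exact P_mem e hS.shift (f := cur f) (fun _ _ => hf _) v 1
  | succ l ih =>
    intro X _ B S hS f hf v
    exact S.sub_mem (P_mem e hS.shift (f := cur f) (fun _ _ => hf _) v 1)
      (ih hS.shift (f := cur f) (fun _ _ => hf _) _ _)

lemma H_d_zero (hid : ∀ i, e i * e i = e i) (hsum : ∑ i, e i = 1)
    {X : Type (max u w)} [AddCommGroup X] (B : BiAct T X) (f : (Fin 0 → T) → X) (v : Fin 0 → T) :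
    H.{u, w} e 0 B (B.d f) v = P e B f v - f v := by
  have h0 : ∀ j, cur (B.d f) v j = B.l j (f v) - B.r j (f v) := fun j => d_zero B f j v
  simp only [H, P_zero, Finset.sum_apply, shift_l, shift_r, h0, one_mul, map_sub, ← B.r_mul, hid,
    Finset.sum_sub_distrib, ← r_sum, hsum, B.r_one, B.lr]

/-- The first argument of `δG` can be consumed by the coefficients of `G` or kept as an argument.
The identity holds because evaluation at `1` sends `a · φ` to `φ a`. -/
lemma d_eval_one {X : Type w} [AddCommGroup X] (B : BiAct T X) {l : ℕ}
    (G : (Fin (l + 1) → T) → T → X) (a : T) (v : Fin (l + 1) → T) :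
    B.shift.d G (Fin.cons a v) 1 + B.shift.d (cur fun w => G w 1) v a = G v a := by
  let ev : (T → X) →+ X := Pi.evalAddMonoidHom _ 1
  have hev : IsHom B.shift.shift B.shift (post T ev) := ⟨fun _ _ => rfl, fun _ _ => rfl⟩
  have h := congrFun (d_nat hev (cur G) v) a
  have h2 : B.shift.d (cur fun w => G w 1) v a = B.shift.shift.d (cur G) v a 1 := h
  rw [d_cons, h2]
  simp

/-- `δ H + H δ = P - 1` in positive degree; `H_d_zero` is the same identity in degree `0`, where
the term `δ H` is absent. -/
theorem homotopy (hid : ∀ i, e i * e i = e i) (hsum : ∑ i, e i = 1) : ∀ (l : ℕ)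
    {X : Type (max u w)} [AddCommGroup X] (B : BiAct T X) (f : (Fin (l + 1) → T) → X), Adm B f →
    ∀ v, B.d (H.{u, w} e l B f) v + H.{u, w} e (l + 1) B (B.d f) v = P e B f v - f v := by
  intro l
  induction l with
  | zero =>
    intro X _ B f hf v
    obtain ⟨a, v, rfl⟩ := exists_cons v
    rw [d_zero, H_cons, cur_d, H_sub, P_sub, P_nat e B.orbit_isHom, H_nat e 0 B.orbit_isHom,
      H_d_zero e hid hsum]
    have h := P_d e hid hsum 0 B.shift (cur f) hf.cur (Fin.cons a v)
    simp only [h, Pi.sub_apply, orbit_apply, d_zero, shift_l, shift_r, B.l_one, one_mul, H]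
    simp only [cur]
    abel
  | succ l ih =>
    intro X _ B f hf v
    obtain ⟨a, v, rfl⟩ := exists_cons v
    rw [d_cons, H_cons, cur_d, H_sub, P_sub, P_nat e B.orbit_isHom, H_nat e (l + 1) B.orbit_isHom]
    have h := P_d e hid hsum (l + 1) B.shift (cur f) hf.cur (Fin.cons a v)
    have h1 := congrFun (ih B.shift (cur f) hf.cur v) a
    have h2 := d_eval_one B (P e B.shift (cur f)) a v
    have h3 : cur (H.{u, w} e (l + 1) B f) = fun w =>
        (cur fun w => P e B.shift (cur f) w 1) w - H.{u, w} e l B.shift (cur f) w := by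
      funext w b
      exact H_cons e l B f b w
    have h4 : B.shift.d (cur (H.{u, w} e (l + 1) B f)) v a =
        B.shift.d (cur fun w => P e B.shift (cur f) w 1) v a
          - B.shift.d (H.{u, w} e l B.shift (cur f)) v a := by
      rw [h3]
      simp [d, smul_sub, Finset.sum_sub_distrib]
      abel
    rw [h4]
    simp only [h, Pi.sub_apply, Pi.add_apply, orbit_apply, B.l_one] at h1 ⊢
    rw [← h2] at h1
    have h5 : cur f v a = f (Fin.cons a v) := rfl
    rw [h5] at h1
    rw [← sub_eq_zero] at h1 ⊢
    rw [← h1]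
    abel

/-- The relative cochain conditions, required only for the idempotents `e i`. -/
structure RelE {X : Type w} [AddCommGroup X] (B : BiAct T X) {l : ℕ} (f : (Fin l → T) → X) :
    Prop where
  bal : ∀ (v : Fin l → T) (s : ℕ) (hs : s + 1 < l) (i : Fin n),
    f (Function.update v ⟨s, by omega⟩ (v ⟨s, by omega⟩ * e i)) =
    f (Function.update v ⟨s + 1, hs⟩ (e i * v ⟨s + 1, hs⟩))
  left : ∀ (h : 0 < l) (i : Fin n) (v : Fin l → T),
    f (Function.update v ⟨0, h⟩ (e i * v ⟨0, h⟩)) = B.l (e i) (f v)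
  right : ∀ (_ : 0 < l) (i : Fin n) (v : Fin l → T),
    f (Function.update v ⟨l - 1, by omega⟩ (v ⟨l - 1, by omega⟩ * e i)) = B.r (e i) (f v)
  zero : l = 0 → ∀ (i : Fin n) (v : Fin l → T), B.l (e i) (f v) = B.r (e i) (f v)

lemma RelE.cur {X : Type w} [AddCommGroup X] {B : BiAct T X} {l : ℕ}
    {f : (Fin (l + 1) → T) → X} (hf : RelE e B f) : RelE e B.shift (cur f) where
  bal v s hs i := by
    funext a
    simp only [BiAct.cur, Fin.cons_update]
    exact hf.bal (Fin.cons a v) (s + 1) (by omega) i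
  left h i v := by
    funext a
    simp only [BiAct.cur, Fin.cons_update, shift_l]
    refine (hf.bal (Fin.cons a v) 0 (by omega) i).symm.trans ?_
    exact congrArg f (update_cons_zero a (a * e i) v)
  right h i v := by
    obtain ⟨l, rfl⟩ : ∃ m, l = m + 1 := ⟨l - 1, by omega⟩
    funext a
    simp only [BiAct.cur, Fin.cons_update, shift_r]
    exact hf.right (by omega) i (Fin.cons a v)
  zero h i v := by
    subst h
    funext a
    simp only [BiAct.cur, shift_l, shift_r]
    rw [← hf.right (by omega) i (Fin.cons a v)]
    exact congrArg f (update_cons_zero a (a * e i) v).symm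

/-- `P` is the identity on relative cochains. -/
theorem P_self (hid : ∀ i, e i * e i = e i) (hsum : ∑ i, e i = 1) : ∀ (l : ℕ)
    {X : Type (max u w)} [AddCommGroup X] (B : BiAct T X) (f : (Fin l → T) → X), Adm B f →
    RelE e B f → ∀ v, P e B f v = f v := by
  intro l
  induction l with
  | zero =>
    intro X _ B f hf hr v
    simp only [P_zero, ← hr.zero rfl, ← B.l_mul, hid]
    rw [← addS_sum (hf.mem v), hsum, B.l_one]
  | succ l ih =>
    intro X _ B f hf hr v
    obtain ⟨a, v, rfl⟩ := exists_cons v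
    simp only [P_cons, ih B.shift (cur f) hf.cur hr.cur]
    have h1 : ∀ i, B.l (e i) (cur f v (e i * a)) = f (Fin.cons (e i * a) v) := by
      intro i
      refine (hr.left (by omega) i (Fin.cons (e i * a) v)).symm.trans ?_
      refine congrArg f ((update_cons_zero _ _ v).trans ?_)
      change (Fin.cons (e i * (e i * a)) v : Fin (l + 1) → T) = _
      rw [← mul_assoc, hid]
    simp only [h1]
    have h2 := map_sum (AddMonoidHom.mk' (fun t => f (Fin.cons t v)) (hf.cons_add v))
      (fun i => e i * a) Finset.univ
    rw [← Finset.sum_mul, hsum, one_mul] at h2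
    exact h2.symm

end

/-! ### Linearity over the ground field -/

section
variable {k : Type*} [Field k] {T : Type u} [Ring T] [Algebra k T] {n : ℕ} (e : Fin n → T)

lemma P_multi {X : Type w} [AddCommGroup X] [Module k X] {B : BiAct T X}
    (hl : ∀ t (c : k) x, B.l t (c • x) = c • B.l t x)
    (hr : ∀ t (c : k) x, B.r t (c • x) = c • B.r t x) {l : ℕ} {f : (Fin l → T) → X}
    (hf : IsMultilinear k f) : IsMultilinear k (P e B f) := by
  have key : ∀ (v : Fin l → T) (i : Fin l) (x : T) (I : Fin (l + 1) → Fin n),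
      (fun s : Fin l => e (I s.castSucc) * Function.update v i x s * e (I s.succ)) =
      Function.update (fun s : Fin l => e (I s.castSucc) * v s * e (I s.succ)) i
        (e (I i.castSucc) * x * e (I i.succ)) := by
    intro v i x I
    funext s
    by_cases h : s = i
    · subst h; simp
    · simp [h]
  constructor
  · intro v i x y
    simp only [P, key, mul_add, add_mul, hf.1, map_add, Finset.sum_add_distrib]
  · intro v i c x
    simp only [P, key, mul_smul_comm, smul_mul_assoc, hf.2, hl, hr, Finset.smul_sum]

/-- The `k`-linear functions `T → X`. -/
def linS (k : Type*) [Field k] (T : Type u) [Ring T] [Algebra k T] (X : Type w) [AddCommGroup X]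
    [Module k X] : AddSubgroup (T → X) where
  carrier := {φ | (∀ x y, φ (x + y) = φ x + φ y) ∧ ∀ (c : k) x, φ (c • x) = c • φ x}
  zero_mem' := by simp
  add_mem' h h' := ⟨fun x y => by simp only [Pi.add_apply, h.1, h'.1]; abel,
    fun c x => by simp only [Pi.add_apply, h.2, h'.2, smul_add]⟩
  neg_mem' h := ⟨fun x y => by simp only [Pi.neg_apply, h.1]; abel,
    fun c x => by simp only [Pi.neg_apply, h.2, smul_neg]⟩

lemma linS_stable {X : Type w} [AddCommGroup X] [Module k X] {B : BiAct T X}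
    (hr : ∀ t (c : k) x, B.r t (c • x) = c • B.r t x) : Stable B.shift (linS k T X) where
  l _ _ h := ⟨fun _ _ => by simp only [shift_l, add_mul, h.1],
    fun _ _ => by simp only [shift_l, smul_mul_assoc, h.2]⟩
  r _ _ h := ⟨fun _ _ => by simp only [shift_r, h.1, map_add],
    fun _ _ => by simp only [shift_r, h.2, hr]⟩

lemma cur_multi {X : Type w} [AddCommGroup X] [Module k X] {l : ℕ} {f : (Fin (l + 1) → T) → X}
    (hf : IsMultilinear k f) : IsMultilinear k (cur f) :=
  ⟨fun v i x y => by funext a; simp only [cur, Fin.cons_update, hf.1, Pi.add_apply],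
    fun v i c x => by funext a; simp only [cur, Fin.cons_update, hf.2, Pi.smul_apply]⟩

lemma cur_mem_linS {X : Type w} [AddCommGroup X] [Module k X] {l : ℕ}
    {f : (Fin (l + 1) → T) → X} (hf : IsMultilinear k f) (v : Fin l → T) :
    cur f v ∈ linS k T X :=
  ⟨fun x y => by simpa [cur] using hf.1 (Fin.cons 0 v) 0 x y,
    fun c x => by simpa [cur] using hf.2 (Fin.cons 0 v) 0 c x⟩

lemma H_multi : ∀ (l : ℕ) {X : Type (max u w)} [AddCommGroup X] [Module k X] {B : BiAct T X}
    (_ : ∀ t (c : k) x, B.l t (c • x) = c • B.l t x)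
    (_ : ∀ t (c : k) x, B.r t (c • x) = c • B.r t x) {f : (Fin (l + 1) → T) → X}
    (_ : IsMultilinear k f), IsMultilinear k (H.{u, w} e l B f) := by
  intro l
  induction l with
  | zero =>
    intro X _ _ B hl hr f hf
    exact ⟨fun v i => i.elim0, fun v i => i.elim0⟩
  | succ l ih =>
    intro X _ _ B hl hr f hf
    have hl' : ∀ t (c : k) (x : T → X), B.shift.l t (c • x) = c • B.shift.l t x :=
      fun _ _ _ => rfl
    have hr' : ∀ t (c : k) (x : T → X), B.shift.r t (c • x) = c • B.shift.r t x :=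
      fun t c x => by funext a; simp [hr]
    have hP := P_multi e hl' hr' (cur_multi hf)
    have hH := ih hl' hr' (cur_multi hf)
    have hS := H_mem e l (linS_stable hr) (cur_mem_linS hf)
    constructor
    · intro v i x y
      refine Fin.cases ?_ (fun j => ?_) i
      · simp only [H, hP.1, Fin.tail_update_zero, Function.update_self, (hS _).1, Pi.add_apply]
        abel
      · simp only [H, hP.1, Fin.tail_update_succ, hH.1, Pi.add_apply]
        rw [Function.update_of_ne (Fin.succ_ne_zero j).symm,
          Function.update_of_ne (Fin.succ_ne_zero j).symm,
          Function.update_of_ne (Fin.succ_ne_zero j).symm]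
        abel
    · intro v i c x
      refine Fin.cases ?_ (fun j => ?_) i
      · simp only [H, hP.2, Fin.tail_update_zero, Function.update_self, (hS _).2, Pi.smul_apply,
          smul_sub]
      · simp only [H, hP.2, Fin.tail_update_succ, hH.2, Pi.smul_apply, smul_sub]
        rw [Function.update_of_ne (Fin.succ_ne_zero j).symm,
          Function.update_of_ne (Fin.succ_ne_zero j).symm]

end

/-! ### Coefficients in an arbitrary universe -/

section
variable {T : Type u} [Ring T] {n : ℕ} (e : Fin n → T) {X : Type w} [AddCommGroup X]

/-- `ULift.up` as an additive map. -/
def up (X : Type w) [AddCommGroup X] : X →+ ULift.{u} X := AddEquiv.ulift.symm.toAddMonoidHom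

/-- The actions on `X`, carried over to `ULift X`. -/
def lift (B : BiAct T X) : BiAct T (ULift.{u} X) where
  l t := (up X).comp ((B.l t).comp AddEquiv.ulift.toAddMonoidHom)
  r t := (up X).comp ((B.r t).comp AddEquiv.ulift.toAddMonoidHom)
  l_one x := congrArg ULift.up (B.l_one _)
  l_mul _ _ _ := congrArg ULift.up (B.l_mul _ _ _)
  r_one x := congrArg ULift.up (B.r_one _)
  r_mul _ _ _ := congrArg ULift.up (B.r_mul _ _ _)
  r_add _ _ _ := congrArg ULift.up (B.r_add _ _ _)
  lr _ _ _ := congrArg ULift.up (B.lr _ _ _)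

lemma up_isHom (B : BiAct T X) : IsHom B B.lift (up X) := ⟨fun _ _ => rfl, fun _ _ => rfl⟩

lemma up_inj : Function.Injective (up.{u} X) := ULift.up_injective

lemma Adm.lift {B : BiAct T X} {l : ℕ} {f : (Fin l → T) → X} (hf : Adm B f) :
    Adm B.lift (fun v => up.{u} X (f v)) where
  mem v s t := congrArg ULift.up (hf.mem v s t)
  add v i x y := congrArg ULift.up (hf.add v i x y)

lemma RelE.lift {B : BiAct T X} {l : ℕ} {f : (Fin l → T) → X} (hf : RelE e B f) :
    RelE e B.lift (fun v => up.{u} X (f v)) where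
  bal v s hs i := congrArg ULift.up (hf.bal v s hs i)
  left h i v := congrArg ULift.up (hf.left h i v)
  right h i v := congrArg ULift.up (hf.right h i v)
  zero h i v := congrArg ULift.up (hf.zero h i v)

lemma P_d' (hid : ∀ i, e i * e i = e i) (hsum : ∑ i, e i = 1) {l : ℕ} {B : BiAct T X}
    {f : (Fin l → T) → X} (hf : Adm B f) : P e B (B.d f) = B.d (P e B f) := by
  funext v
  apply up_inj.{u}
  have h := P_d.{u, w} e hid hsum l B.lift _ hf.lift v
  have h1 : B.lift.d (fun v => up.{u} X (f v)) = fun v => up X (B.d f v) :=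
    funext (d_nat B.up_isHom f)
  have h2 : P e B.lift (fun v => up.{u} X (f v)) = fun v => up X (P e B f v) :=
    funext (P_nat e B.up_isHom f)
  rwa [h1, h2, P_nat e B.up_isHom, d_nat B.up_isHom] at h

lemma P_self' (hid : ∀ i, e i * e i = e i) (hsum : ∑ i, e i = 1) {l : ℕ} {B : BiAct T X}
    {f : (Fin l → T) → X} (hf : Adm B f) (hr : RelE e B f) : P e B f = f := by
  funext v
  apply up_inj.{u}
  rw [← P_nat e B.up_isHom]
  exact P_self.{u, w} e hid hsum l B.lift _ hf.lift hr.lift v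

/-- A multilinear cocycle differs from its average by the coboundary of a multilinear cochain. -/
lemma exists_homotopy {k : Type*} [Field k] [Algebra k T] [Module k X]
    (hid : ∀ i, e i * e i = e i) (hsum : ∑ i, e i = 1) {l : ℕ} {B : BiAct T X}
    (hl : ∀ t (c : k) x, B.l t (c • x) = c • B.l t x)
    (hr : ∀ t (c : k) x, B.r t (c • x) = c • B.r t x)
    {f : (Fin (l + 1) → T) → X} (hf : Adm B f) (hm : IsMultilinear k f) (h0 : B.d f = 0) :
    ∃ h : (Fin l → T) → X, IsMultilinear k h ∧ f = P e B f + B.d h := by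
  have hH : IsMultilinear k (H.{u, w} e l B.lift (fun v => up.{u} X (f v))) :=
    H_multi e l (fun t c x => congrArg ULift.up (hl t c x.down))
      (fun t c x => congrArg ULift.up (hr t c x.down))
      ⟨fun v i x y => congrArg ULift.up (hm.1 v i x y),
        fun v i c x => congrArg ULift.up (hm.2 v i c x)⟩
  let h : (Fin l → T) → X := fun v => - (H.{u, w} e l B.lift (fun v => up.{u} X (f v)) v).down
  refine ⟨h, ⟨fun v i x y => ?_, fun v i c x => ?_⟩, ?_⟩
  · simp only [h, hH.1, ULift.add_down, neg_add]
  · simp only [h, hH.2, ULift.smul_down, smul_neg]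
  · funext v
    have hh := homotopy.{u, w} e hid hsum l B.lift _ hf.lift v
    have h1 : B.lift.d (fun v => up.{u} X (f v)) = fun v => 0 := by
      funext v
      rw [d_nat B.up_isHom, h0, Pi.zero_apply, map_zero]
    have hbot : Stable B.lift (⊥ : AddSubgroup (ULift.{u} X)) :=
      ⟨fun t x hx => by rw [AddSubgroup.mem_bot] at hx ⊢; rw [hx, map_zero],
        fun t x hx => by rw [AddSubgroup.mem_bot] at hx ⊢; rw [hx, map_zero]⟩
    have h2 : H.{u, w} e (l + 1) B.lift (fun _ => 0) v = 0 :=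
      H_mem e (l + 1) hbot (fun _ => rfl) v
    have h3 : H.{u, w} e l B.lift (fun v => up.{u} X (f v)) = fun v => up X ((-h) v) := by
      funext v
      exact ULift.down_injective (neg_neg _).symm
    rw [h1, h2, h3, P_nat e B.up_isHom, d_nat B.up_isHom, add_zero, ← map_sub] at hh
    have hh := up_inj hh
    have h4 : B.d (-h) v = - B.d h v := by
      simp [d]
      abel
    rw [h4] at hh
    rw [Pi.add_apply, ← neg_neg (B.d h v), hh]
    abel

end

/-! ### Bimodules -/

section
variable {k : Type*} {T : Type u} {X : Type w} [Field k] [Ring T] [Algebra k T]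
  [AddCommGroup X] [Module k X] [Module T X] [Module Tᵐᵒᵖ X] [SMulCommClass T Tᵐᵒᵖ X]
  {n : ℕ} {e : Fin n → T}

/-- The two actions of a bimodule. -/
def ofModule (T : Type u) (X : Type w) [Ring T] [AddCommGroup X] [Module T X] [Module Tᵐᵒᵖ X]
    [SMulCommClass T Tᵐᵒᵖ X] : BiAct T X where
  l t := DistribSMul.toAddMonoidHom X t
  r t := DistribSMul.toAddMonoidHom X (op t)
  l_one := one_smul T
  l_mul := mul_smul
  r_one := one_smul Tᵐᵒᵖ
  r_mul s t x := mul_smul (op t) (op s) x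
  r_add s t x := add_smul (op s) (op t) x
  lr s t x := smul_comm s (op t) x

@[simp] lemma ofModule_l (t : T) (x : X) : (ofModule T X).l t x = t • x := rfl
@[simp] lemma ofModule_r (t : T) (x : X) : (ofModule T X).r t x = op t • x := rfl

lemma adm_ofModule {l : ℕ} {f : (Fin l → T) → X} (hf : IsMultilinear k f) :
    Adm (ofModule T X) f := ⟨fun v s t => add_smul s t (f v), hf.1⟩

lemma relE_of_rel {l : ℕ} {f : (Fin l → T) → X}
    (hf : RelCochain k (↑(Submodule.span k (Set.range e)) : Set T) f) :
    RelE e (ofModule T X) f := by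
  have he : ∀ i, e i ∈ (↑(Submodule.span k (Set.range e)) : Set T) :=
    fun i => Submodule.subset_span ⟨i, rfl⟩
  exact ⟨fun v s hs i => hf.2.1 v s hs _ (he i), fun h i v => (hf.2.2.1 h _ (he i) v).1,
    fun h i v => (hf.2.2.1 h _ (he i) v).2, fun h i v => hf.2.2.2 h _ (he i) v⟩

/-- An element of `R` acts on each `e i` by a scalar. -/
lemma span_scalar (horth : ∀ i j : Fin n, e i * e j = if i = j then e i else 0) {r : T}
    (hr : r ∈ Submodule.span k (Set.range e)) :
    ∃ ρ : Fin n → k, ∀ i, e i * r = ρ i • e i ∧ r * e i = ρ i • e i := by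
  induction hr using Submodule.span_induction with
  | mem x hx =>
    obtain ⟨j, rfl⟩ := hx
    refine ⟨fun i => if i = j then 1 else 0, fun i => ?_⟩
    by_cases h : i = j
    · subst h; simp [horth]
    · simp [horth, h, Ne.symm h]
  | zero => exact ⟨0, by simp⟩
  | add x y _ _ hx hy =>
    obtain ⟨ρ, h⟩ := hx
    obtain ⟨σ, h'⟩ := hy
    exact ⟨ρ + σ, fun i => by simp [mul_add, add_mul, add_smul, h, h']⟩
  | smul c x _ hx =>
    obtain ⟨ρ, h⟩ := hx
    exact ⟨c • ρ, fun i => by simp [h, smul_smul]⟩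

variable [IsScalarTower k T X]

/-- Scalars act on `X` through the left action of `T`, which commutes with the right action. -/
lemma op_smul_comm (t : T) (c : k) (x : X) : op t • c • x = c • op t • x := by
  rw [← algebraMap_smul T c x, ← smul_comm, algebraMap_smul]

lemma update_smul_eq {l : ℕ} {f : (Fin l → T) → X} (hf : IsMultilinear k f) (v : Fin l → T)
    (i : Fin l) (c : k) (x : T) (hx : x = c • v i) : f (Function.update v i x) = c • f v := by
  rw [hx, hf.2, Function.update_eq_self]

/-- The average of a multilinear cochain is relative, provided the two actions of `k` agree on the
values of the cochain. -/
lemma P_rel (horth : ∀ i j : Fin n, e i * e j = if i = j then e i else 0)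
    {l : ℕ} {f : (Fin l → T) → X} (hf : IsMultilinear k f)
    (hc : ∀ (c : k) v, op (algebraMap k T c) • f v = c • f v) :
    RelCochain k (↑(Submodule.span k (Set.range e)) : Set T) (P e (ofModule T X) f) := by
  -- The right action need not be `k`-linear on all of `X`, so moving the scalar uses `hc`.
  have hR : ∀ (ρ : k) (y r : T) v, y * r = ρ • y → op r • op y • f v = ρ • op y • f v := by
    intro ρ y r v h
    rw [← mul_smul, ← op_mul, h, Algebra.smul_def, op_mul, mul_smul, hc, op_smul_comm]
  have hL : ∀ (ρ : k) (y r : T) (x : X), r * y = ρ • y → r • y • x = ρ • y • x := by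
    intro ρ y r x h
    rw [← mul_smul, h, smul_assoc]
  have hu : ∀ (v : Fin l → T) (i : Fin l) (x : T) (c : k) (I : Fin (l + 1) → Fin n),
      e (I i.castSucc) * x * e (I i.succ) = c • (e (I i.castSucc) * v i * e (I i.succ)) →
      f (fun s : Fin l => e (I s.castSucc) * Function.update v i x s * e (I s.succ)) =
      c • f (fun s : Fin l => e (I s.castSucc) * v s * e (I s.succ)) := by
    intro v i x c I h
    rw [← update_smul_eq hf _ i c _ h]
    congr 1
    funext s
    by_cases h : s = i
    · subst h; simp
    · simp [h]
  refine ⟨P_multi e (fun t c x => smul_comm t c x) op_smul_comm hf, ?_, ?_, ?_⟩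
  · intro v s hs r hr
    obtain ⟨ρ, hρ⟩ := span_scalar horth hr
    refine Finset.sum_congr rfl fun I _ => ?_
    rw [hu v ⟨s, by omega⟩ _ (ρ (I ⟨s + 1, by omega⟩)) I,
      hu v ⟨s + 1, hs⟩ _ (ρ (I ⟨s + 1, by omega⟩)) I]
    · rw [← mul_assoc, Fin.castSucc_mk, (hρ _).1, smul_mul_assoc, smul_mul_assoc]
    · rw [mul_assoc, mul_assoc, Fin.succ_mk, (hρ _).2, mul_smul_comm, mul_smul_comm, mul_assoc]
  · intro h r hr v
    obtain ⟨ρ, hρ⟩ := span_scalar horth hr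
    constructor
    · simp only [P, Finset.smul_sum]
      refine Finset.sum_congr rfl fun I _ => ?_
      rw [hu v ⟨0, h⟩ _ (ρ (I 0)) I]
      · simp only [ofModule_l, ofModule_r]
        rw [hL (ρ (I 0)) _ _ _ (hρ _).2, op_smul_comm, smul_comm]
      · rw [← mul_assoc, Fin.castSucc_mk]
        change e (I 0) * r * _ * _ = _ • (e (I 0) * _ * _)
        rw [(hρ _).1, smul_mul_assoc, smul_mul_assoc]
    · simp only [P, Finset.smul_sum]
      refine Finset.sum_congr rfl fun I _ => ?_
      have hlast : (⟨l - 1, by omega⟩ : Fin l).succ = Fin.last l := by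
        ext; simp; omega
      rw [hu v ⟨l - 1, by omega⟩ _ (ρ (I (Fin.last l))) I]
      · simp only [ofModule_l, ofModule_r]
        rw [← smul_comm (e (I 0)) (op r), hR (ρ (I (Fin.last l))) _ _ _ (hρ _).1, op_smul_comm]
      · rw [hlast, mul_assoc, mul_assoc, (hρ _).2, mul_smul_comm, mul_smul_comm, mul_assoc]
  · intro h r hr v
    subst h
    obtain ⟨ρ, hρ⟩ := span_scalar horth hr
    simp only [P_zero, Finset.smul_sum]
    refine Finset.sum_congr rfl fun i _ => ?_
    simp only [ofModule_l, ofModule_r]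
    rw [hL (ρ i) _ _ _ (hρ _).2, ← smul_comm (e i) (op r), hR (ρ i) _ _ _ (hρ _).1, smul_comm]

lemma merge_snoc_last {l : ℕ} (v : Fin (l + 1) → T) (t : T) :
    merge (Fin.snoc v t : Fin (l + 2) → T) (Fin.last l) =
      Fin.snoc (Fin.init v) (v (Fin.last l) * t) := by
  funext s
  refine Fin.lastCases ?_ (fun j => ?_) s
  · simp [merge]
  · simp [merge, Fin.init]

lemma merge_snoc_castSucc {l : ℕ} (v : Fin (l + 1) → T) (t : T) (i : Fin l) :
    merge (Fin.snoc v t : Fin (l + 2) → T) i.castSucc = Fin.snoc (merge v i) t := by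
  funext s
  refine Fin.lastCases ?_ (fun j => ?_) s
  · simp [merge, i.2.not_gt, i.2.ne']
  · simp [merge, ← Fin.castSucc_succ]

lemma tail_snoc {l : ℕ} (v : Fin (l + 1) → T) (t : T) :
    Fin.tail (Fin.snoc v t : Fin (l + 2) → T) = Fin.snoc (Fin.tail v) t := by
  funext s
  refine Fin.lastCases ?_ (fun j => ?_) s
  · simp [Fin.tail]
  · simp [Fin.tail, ← Fin.castSucc_succ]

/-- If a cochain and its coboundary are both multilinear, then the left and right actions of `k`
agree on the values of the cochain: in `δf(v, c)` only the term `f(v) · c` could fail to be linear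
in `c`. -/
lemma central_of_multi {l : ℕ} {f : (Fin l → T) → X} (hf : IsMultilinear k f)
    (hd : IsMultilinear k (hochδ f)) (c : k) (v : Fin l → T) :
    op (algebraMap k T c) • f v = c • f v := by
  have h1 : hochδ f (Fin.snoc v (c • 1)) = c • hochδ f (Fin.snoc v 1) := by
    simpa only [update_snoc_last] using hd.2 (Fin.snoc v 0) (Fin.last l) c 1
  have h2 : ∀ {m : ℕ} {f : (Fin (m + 1) → T) → X} (_ : IsMultilinear k f) (u : Fin m → T) (t : T),
      f (Fin.snoc u (c • t)) = c • f (Fin.snoc u t) := by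
    intro m f hf u t
    simpa only [update_snoc_last] using hf.2 (Fin.snoc u 0) (Fin.last m) c t
  rw [Algebra.algebraMap_eq_smul_one]
  have h3 : ((-1 : ℤ) ^ (l + 1)) • (op (c • (1 : T)) • f v) = ((-1 : ℤ) ^ (l + 1)) • c • f v := by
    cases l with
    | zero =>
      have hsn : ∀ t : T, (Fin.snoc v t : Fin 1 → T) = Fin.cons t v := by
        intro t; funext s; obtain rfl := Fin.fin_one_eq_zero s; rfl
      have h4 := fun t : T => (ofModule T X).d_zero f t v
      change ∀ t : T, hochδ f _ = t • f v - op t • f v at h4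
      rw [hsn, hsn, h4, h4] at h1
      simp only [smul_assoc, one_smul, op_one, sub_self, smul_zero, sub_eq_zero] at h1
      rw [← h1]
    | succ l =>
      have h00 : (0 : Fin (l + 2)) = Fin.castSucc 0 := rfl
      simp only [hochδ, Fin.sum_univ_castSucc, merge_snoc_last, merge_snoc_castSucc, tail_snoc,
        Fin.snoc_last, Fin.init_snoc, mul_smul_comm, h2 hf, op_one, one_smul, smul_add,
        Finset.smul_sum] at h1
      rw [h00, Fin.snoc_castSucc, Fin.snoc_castSucc] at h1
      simp only [smul_comm c] at h1
      exact add_left_cancel h1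
  rcases neg_one_pow_eq_or ℤ (l + 1) with h | h <;> simpa [h] using h3

end
end BiAct

/-- let `T` be a `k`-algebra with separable subalgebra `R = kⁿ`
spanned by a complete orthogonal idempotent system `e`, and `X` a `T`-bimodule.
The relative complex `0 → X^R → Hom_{R-R}(T,X) → ... → Hom_{R-R}(T^{⊗_R l}, X) → ...`
(with the usual Hochschild coboundary) computes the Hochschild cohomology
`HH^*(T,X)`: the inclusion into the full Hochschild complex
`Hom_k(T^{⊗_k l}, X)` induces an isomorphism in cohomology in every degree
(stated as surjectivity and injectivity on cohomology classes).  In particular,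
in degree `0` it computes `X^T = {x | t • x = x • t for all t}`. -/
theorem stmt_4 {k T : Type*} [Field k] [Ring T] [Algebra k T]
    {n : ℕ} (e : Fin n → T)
    (horth : ∀ i j : Fin n, e i * e j = if i = j then e i else 0)
    (hsum : ∑ i, e i = 1)
    {X : Type*} [AddCommGroup X] [Module k X] [Module T X] [Module Tᵐᵒᵖ X]
    [SMulCommClass T Tᵐᵒᵖ X] [IsScalarTower k T X] :
    -- surjectivity on cohomology in each degree `m+1`
    (∀ (m : ℕ) (f : (Fin (m + 1) → T) → X), IsMultilinear k f → hochδ f = 0 →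
      ∃ (g : (Fin (m + 1) → T) → X) (h : (Fin m → T) → X),
        RelCochain k (↑(Submodule.span k (Set.range e))) g ∧ hochδ g = 0 ∧
        IsMultilinear k h ∧ f = g + hochδ h) ∧
    -- injectivity on cohomology in each degree `m+1`
    (∀ (m : ℕ) (g : (Fin (m + 1) → T) → X),
      RelCochain k (↑(Submodule.span k (Set.range e))) g → hochδ g = 0 →
      (∃ h : (Fin m → T) → X, IsMultilinear k h ∧ g = hochδ h) →
      ∃ h' : (Fin m → T) → X,
        RelCochain k (↑(Submodule.span k (Set.range e))) h' ∧ g = hochδ h') ∧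
    -- in degree 0 the relative complex computes `X^T`
    (∀ f : (Fin 0 → T) → X,
      ((RelCochain k (↑(Submodule.span k (Set.range e))) f ∧ hochδ f = 0) ↔
        ∀ t : T, t • f (fun s => s.elim0) = op t • f (fun s => s.elim0)) ∧
      (hochδ f = 0 ↔
        ∀ t : T, t • f (fun s => s.elim0) = op t • f (fun s => s.elim0))) := by
  have hid : ∀ i, e i * e i = e i := fun i => by simp [horth]
  have hδ : ∀ {l : ℕ} (f : (Fin l → T) → X), hochδ f = (BiAct.ofModule T X).d f := fun _ => rfl
  refine ⟨fun m f hf h0 => ?_, fun m g hg _ ⟨h, hh, hgh⟩ => ?_, fun f => ?_⟩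
  · have hz : IsMultilinear k (hochδ f) := by rw [h0]; exact ⟨by simp, by simp⟩
    obtain ⟨h, hh, hfh⟩ := BiAct.exists_homotopy e hid hsum (B := BiAct.ofModule T X)
      (fun t c x => smul_comm t c x) BiAct.op_smul_comm (BiAct.adm_ofModule hf) hf h0
    refine ⟨BiAct.P e (BiAct.ofModule T X) f, h,
      BiAct.P_rel horth hf (BiAct.central_of_multi hf hz), ?_, hh, hfh⟩
    rw [hδ, ← BiAct.P_d' e hid hsum (BiAct.adm_ofModule hf), ← hδ, h0]
    funext v
    simp [BiAct.P]
  · have hz : IsMultilinear k (hochδ h) := hgh ▸ hg.1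
    refine ⟨BiAct.P e (BiAct.ofModule T X) h,
      BiAct.P_rel horth hh (BiAct.central_of_multi hh hz), ?_⟩
    rw [hδ, ← BiAct.P_d' e hid hsum (BiAct.adm_ofModule hh), ← hδ, ← hgh]
    exact (BiAct.P_self' e hid hsum (BiAct.adm_ofModule hg.1) (BiAct.relE_of_rel hg)).symm
  · have key : hochδ f = 0 ↔
        ∀ t : T, t • f (fun s => s.elim0) = op t • f (fun s => s.elim0) := by
      have h : ∀ t : T, hochδ f (Fin.cons t fun s => s.elim0) =
          t • f (fun s => s.elim0) - op t • f (fun s => s.elim0) :=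
        fun t => BiAct.d_zero (BiAct.ofModule T X) f t _
      constructor
      · intro h0 t
        rw [← sub_eq_zero, ← h, h0, Pi.zero_apply]
      · intro h0
        funext v
        obtain ⟨a, u, rfl⟩ := BiAct.exists_cons v
        rw [Subsingleton.elim u fun s => s.elim0, h, h0, sub_self, Pi.zero_apply]
    refine ⟨⟨fun h => key.1 h.2, fun h => ⟨⟨⟨fun _ i => i.elim0, fun _ i => i.elim0⟩,
      fun _ s hs => absurd hs (by omega), fun h => absurd h (by omega),
      fun _ r _ v => ?_⟩, key.2 h⟩⟩, key⟩
    rw [Subsingleton.elim v fun s => s.elim0]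
    exact h r
end

section
/- Let Q be the quiver with vertices a, b, c, d, one arrow a → b, two arrows b → c, and two arrows b → d. Then the Hochschild cohomology of the path algebra kQ with coefficients in itself satisfies: HH^0(kQ) ≅ k, HH^1(kQ) ≅ k^6, and HH^l(kQ) = 0 for all l ≥ 2. -/
/-- Merge entries `i`, `i+1` of a tuple using a given multiplication. -/
def mergeWith {T : Type*} (mul : T → T → T) {m : ℕ} (v : Fin (m + 1) → T)
    (i : Fin m) : Fin m → T := fun s =>
  if s.1 < i.1 then v s.castSucc
  else if s.1 = i.1 then mul (v s.castSucc) (v s.succ)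
  else v s.succ

/-- The Hochschild coboundary for an algebra with multiplication `mul`, acting on
cochains with coefficients in the algebra itself. -/
def hochδ' {T : Type*} [AddCommGroup T]
    (mul : T → T → T) {l : ℕ} (f : (Fin l → T) → T) : (Fin (l + 1) → T) → T :=
  fun v =>
    mul (v 0) (f (Fin.tail v)) +
      (∑ i : Fin l, ((-1 : ℤ) ^ (i.1 + 1)) • f (mergeWith mul v i)) +
      ((-1 : ℤ) ^ (l + 1)) • mul (f (Fin.init v)) (v (Fin.last l))

/-- The path algebra `kQ` of the quiver `Q : a → b ⇉ c, b ⇉ d` (one arrow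
`a → b`, two arrows `b → c`, two arrows `b → d`), with `k`-basis the 4 trivial
paths, the 5 arrows, and the 4 paths of length two; coordinates:
first component = trivial paths at `a, b, c, d`; second component = arrows
`u : a → b`, `v₁ v₂ : b → c`, `w₁ w₂ : b → d`; third component = the length-two
paths `v₁u, v₂u, w₁u, w₂u`. -/
abbrev PathAlgQ (k : Type*) := (Fin 4 → k) × (Fin 5 → k) × (Fin 4 → k)

/-- Target vertex of each arrow. -/
def atgt : Fin 5 → Fin 4 := ![1, 2, 2, 3, 3]

/-- Source vertex of each arrow. -/
def asrc : Fin 5 → Fin 4 := ![0, 1, 1, 1, 1]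

/-- Target vertex of each length-two path. -/
def ptgt : Fin 4 → Fin 4 := ![2, 2, 3, 3]

/-- Multiplication of the path algebra `kQ` (concatenation of paths). -/
def mulQ {k : Type*} [CommRing k] (x y : PathAlgQ k) : PathAlgQ k :=
  (fun e => x.1 e * y.1 e,
   fun a => x.1 (atgt a) * y.2.1 a + x.2.1 a * y.1 (asrc a),
   fun p => x.1 (ptgt p) * y.2.2 p + x.2.2 p * y.1 0 +
     x.2.1 p.succ * y.2.1 0)

namespace QuiverHH

variable {k : Type*} [Field k]

/-! ### The path algebra: multiplication table on the basis of paths -/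

/-- The trivial path at the vertex `i`. -/
def E (i : Fin 4) : PathAlgQ k := (Pi.single i 1, 0, 0)

/-- The arrow `j`, seen in the path algebra. -/
def R (j : Fin 5) : PathAlgQ k := (0, Pi.single j 1, 0)

/-- The path of length two that runs through the arrow `p.succ` after the arrow `0`. -/
def P (p : Fin 4) : PathAlgQ k := (0, 0, Pi.single p 1)

/-- Multiplication of the path algebra as a bilinear map. -/
def M : PathAlgQ k →ₗ[k] PathAlgQ k →ₗ[k] PathAlgQ k :=
  LinearMap.mk₂ k mulQ
    (fun x y z => by ext <;> simp [mulQ] <;> ring)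
    (fun c x y => by ext <;> simp [mulQ] <;> ring)
    (fun x y z => by ext <;> simp [mulQ] <;> ring)
    (fun c x y => by ext <;> simp [mulQ] <;> ring)

lemma mulQ_eq (x y : PathAlgQ k) : mulQ x y = M x y := rfl

lemma M_assoc (x y z : PathAlgQ k) : M (M x y) z = M x (M y z) := by
  simp only [← mulQ_eq]
  refine Prod.ext ?_ (Prod.ext ?_ ?_)
  · funext i; simp [mulQ]; ring
  · funext i; simp [mulQ]; ring
  · funext i; fin_cases i <;> simp [mulQ, atgt, asrc, ptgt] <;> ring

lemma EE (i j : Fin 4) : M (E i : PathAlgQ k) (E j) = if i = j then E i else 0 := by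
  rw [← mulQ_eq]
  fin_cases i <;> fin_cases j <;> ext t <;> fin_cases t <;> simp [mulQ, E, asrc, atgt, ptgt]

lemma ER (i : Fin 4) (j : Fin 5) :
    M (E i : PathAlgQ k) (R j) = if i = atgt j then R j else 0 := by
  rw [← mulQ_eq]
  fin_cases i <;> fin_cases j <;> ext t <;> fin_cases t <;> simp [mulQ, E, R, asrc, atgt, ptgt]

lemma RE (j : Fin 5) (i : Fin 4) :
    M (R j : PathAlgQ k) (E i) = if i = asrc j then R j else 0 := by
  rw [← mulQ_eq]
  fin_cases i <;> fin_cases j <;> ext t <;> fin_cases t <;> simp [mulQ, E, R, asrc, atgt, ptgt]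

lemma EP (i p : Fin 4) : M (E i : PathAlgQ k) (P p) = if i = ptgt p then P p else 0 := by
  rw [← mulQ_eq]
  fin_cases i <;> fin_cases p <;> ext t <;> fin_cases t <;> simp [mulQ, E, P, asrc, atgt, ptgt]

lemma PE (p i : Fin 4) : M (P p : PathAlgQ k) (E i) = if i = 0 then P p else 0 := by
  rw [← mulQ_eq]
  fin_cases i <;> fin_cases p <;> ext t <;> fin_cases t <;> simp [mulQ, E, P, asrc, atgt, ptgt]

lemma RR (i j : Fin 5) :
    M (R i : PathAlgQ k) (R j) = if j = 0 then ![0, P 0, P 1, P 2, P 3] i else 0 := by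
  rw [← mulQ_eq]
  fin_cases i <;> fin_cases j <;> ext t <;> fin_cases t <;> simp [mulQ, R, P]

lemma RR_succ (p : Fin 4) : M (R p.succ : PathAlgQ k) (R 0) = P p := by
  fin_cases p <;> simp [RR]

lemma RP (j : Fin 5) (p : Fin 4) : M (R j : PathAlgQ k) (P p) = 0 := by
  rw [← mulQ_eq]; ext t <;> simp [mulQ, R, P]

lemma PR (p : Fin 4) (j : Fin 5) : M (P p : PathAlgQ k) (R j) = 0 := by
  rw [← mulQ_eq]; ext t <;> simp [mulQ, R, P]

lemma PP (p q : Fin 4) : M (P p : PathAlgQ k) (P q) = 0 := by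
  rw [← mulQ_eq]; ext t <;> simp [mulQ, P]

lemma decomp (x : PathAlgQ k) :
    x = ∑ i, x.1 i • E i + ∑ j, x.2.1 j • R j + ∑ p, x.2.2 p • P p := by
  refine Prod.ext ?_ (Prod.ext ?_ ?_) <;> funext t <;>
    simp [E, R, P, Prod.fst_sum, Prod.snd_sum, Pi.single_apply]

lemma lin_ext {V : Type*} [AddCommGroup V] [Module k V] {f g : PathAlgQ k →ₗ[k] V}
    (hE : ∀ i, f (E i) = g (E i)) (hR : ∀ j, f (R j) = g (R j))
    (hP : ∀ p, f (P p) = g (P p)) : f = g := by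
  ext x <;> first | exact hE _ | exact hR _ | exact hP _

lemma sum_E_mul (z : PathAlgQ k) : ∑ i, M (E i) z = z := by
  have : (∑ i, M (E i)) = (LinearMap.id : PathAlgQ k →ₗ[k] PathAlgQ k) := by
    apply lin_ext <;> intro i <;> simp [EE, ER, EP]
  simpa using congrArg (fun L => L z) this

lemma sum_mul_E (z : PathAlgQ k) : ∑ i, M z (E i) = z := by
  have : (∑ i, M.flip (E i)) = (LinearMap.id : PathAlgQ k →ₗ[k] PathAlgQ k) := by
    apply lin_ext <;> intro i <;> simp [EE, RE, PE]
  simpa using congrArg (fun L => L z) this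

/-! ### The derivation `D : A → A ⊗ A ⊗ A` -/

/-- The derivation `D : A → A ⊗ A ⊗ A` with
`D (α₁ ⋯ αᵣ) = ∑ⱼ α₁ ⋯ αⱼ₋₁ ⊗ αⱼ ⊗ αⱼ₊₁ ⋯ αᵣ`, an empty product being a trivial path, followed
by the map `Φ` on the three tensor factors. It is written out on the basis of paths, so `Φ` need
not be trilinear. -/
def Dsum (Φ : PathAlgQ k → PathAlgQ k → PathAlgQ k → PathAlgQ k) :
    PathAlgQ k →ₗ[k] PathAlgQ k where
  toFun a := ∑ j, a.2.1 j • Φ (E (atgt j)) (R j) (E (asrc j)) +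
    ∑ p, a.2.2 p • (Φ (R p.succ) (R 0) (E 0) + Φ (E (ptgt p)) (R p.succ) (R 0))
  map_add' a b := by
    simp only [Prod.fst_add, Prod.snd_add, Pi.add_apply, add_smul, Finset.sum_add_distrib]
    abel
  map_smul' c a := by
    simp only [Prod.smul_fst, Prod.smul_snd, Pi.smul_apply, smul_eq_mul, mul_smul,
      Finset.smul_sum, smul_add, RingHom.id_apply]

lemma Dsum_apply (Φ : PathAlgQ k → PathAlgQ k → PathAlgQ k → PathAlgQ k) (a : PathAlgQ k) :
    Dsum Φ a = ∑ j, a.2.1 j • Φ (E (atgt j)) (R j) (E (asrc j)) +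
    ∑ p, a.2.2 p • (Φ (R p.succ) (R 0) (E 0) + Φ (E (ptgt p)) (R p.succ) (R 0)) := rfl

@[simp] lemma Dsum_E (Φ : PathAlgQ k → PathAlgQ k → PathAlgQ k → PathAlgQ k) (i : Fin 4) :
    Dsum Φ (E i) = 0 := by simp [Dsum_apply, E]

@[simp] lemma Dsum_R (Φ : PathAlgQ k → PathAlgQ k → PathAlgQ k → PathAlgQ k) (j : Fin 5) :
    Dsum Φ (R j) = Φ (E (atgt j)) (R j) (E (asrc j)) := by
  simp [Dsum_apply, R, Pi.single_apply]

@[simp] lemma Dsum_P (Φ : PathAlgQ k → PathAlgQ k → PathAlgQ k → PathAlgQ k) (p : Fin 4) :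
    Dsum Φ (P p) = Φ (R p.succ) (R 0) (E 0) + Φ (E (ptgt p)) (R p.succ) (R 0) := by
  simp [Dsum_apply, P, Pi.single_apply, Finset.sum_add_distrib]

lemma Dsum_add (Φ Ψ : PathAlgQ k → PathAlgQ k → PathAlgQ k → PathAlgQ k) (a : PathAlgQ k) :
    Dsum (fun x y z => Φ x y z + Ψ x y z) a = Dsum Φ a + Dsum Ψ a := by
  simp only [Dsum_apply, smul_add, Finset.sum_add_distrib]; abel

lemma Dsum_neg (Φ : PathAlgQ k → PathAlgQ k → PathAlgQ k → PathAlgQ k) (a : PathAlgQ k) :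
    Dsum (fun x y z => - Φ x y z) a = - Dsum Φ a := by
  simp only [Dsum_apply, smul_add, Finset.sum_add_distrib, smul_neg, Finset.sum_neg_distrib]; abel

lemma Dsum_sub (Φ Ψ : PathAlgQ k → PathAlgQ k → PathAlgQ k → PathAlgQ k) (a : PathAlgQ k) :
    Dsum (fun x y z => Φ x y z - Ψ x y z) a = Dsum Φ a - Dsum Ψ a := by
  simp only [sub_eq_add_neg, Dsum_add, Dsum_neg]

/-- The two outer faces of `D a`: the sum telescopes, so that multiplying the first two tensor
factors of `D a` minus multiplying the last two gives `∑ᵢ (a eᵢ ⊗ eᵢ - eᵢ ⊗ eᵢ a)`. -/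
lemma telescope (G : PathAlgQ k →ₗ[k] PathAlgQ k) (a : PathAlgQ k) :
    ∑ i, M (E i) (G (M (E i) a)) + Dsum (fun x y z => M x (M y (G z))) a
      - Dsum (fun x y z => M x (G (M y z))) a = ∑ i, M (M a (E i)) (G (E i)) := by
  have : (∑ i, (M (E i)).comp (G.comp (M (E i)))) + Dsum (fun x y z => M x (M y (G z)))
      - Dsum (fun x y z => M x (G (M y z)))
      = ∑ i, (M.flip (G (E i))).comp (M.flip (E i)) := by
    apply lin_ext
    · intro i; fin_cases i <;> simp [Fin.sum_univ_four, EE]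
    · intro j; fin_cases j <;> simp [Fin.sum_univ_four, ER, RE, ← M_assoc, asrc, atgt]
    · intro j
      fin_cases j <;> simp [Fin.sum_univ_four, EP, PE, ER, RE, RR, ← M_assoc, asrc, atgt, ptgt] <;> abel
  simpa using congrArg (fun L => L a) this

/-- `D` is a derivation. -/
lemma Dsum_mul (F : PathAlgQ k →ₗ[k] PathAlgQ k →ₗ[k] PathAlgQ k) (a b : PathAlgQ k) :
    Dsum (fun x y z => M x (F y z)) (M a b) =
      M a (Dsum (fun x y z => M x (F y z)) b) + Dsum (fun x y z => M x (F y (M z b))) a := by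
  set D := Dsum (fun x y z => M x (F y z)) with hD
  have hE (i : Fin 4) (b) : D (M (E i) b) = M (E i) (D b) := by
    have : D.comp (M (E i)) = (M (E i)).comp D := by
      apply lin_ext <;> intro j
      · by_cases h : i = j <;> simp [hD, EE, h]
      · by_cases h : i = atgt j <;> simp [hD, ER, EE, h, ← M_assoc]
      · fin_cases i <;> fin_cases j <;> simp [hD, ER, EE, EP, ← M_assoc, ptgt, atgt]
    simpa using congrArg (fun L => L b) this
  have hR (j : Fin 5) (b) : D (M (R j) b) =
      M (R j) (D b) + M (E (atgt j)) (F (R j) (M (E (asrc j)) b)) := by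
    have : D.comp (M (R j)) = (M (R j)).comp D
        + (M (E (atgt j))).comp ((F (R j)).comp (M (E (asrc j)))) := by
      apply lin_ext <;> intro i
      · by_cases h : i = asrc j
        · simp [hD, RE, EE, h]
        · simp [hD, RE, EE, h, Ne.symm h]
      · fin_cases i <;> fin_cases j <;>
          simp [hD, RE, ER, RR, ← M_assoc, asrc, atgt, ptgt]
      · fin_cases i <;> fin_cases j <;>
          simp [hD, RE, RR, RP, EP, ← M_assoc, asrc, ptgt]
    simpa using congrArg (fun L => L b) this
  have hP (p : Fin 4) (b) : D (M (P p) b) = M (P p) (D b) + (M (R p.succ) (F (R 0) (M (E 0) b))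
      + M (E (ptgt p)) (F (R p.succ) (M (R 0) b))) := by
    have h₁ : M (R p.succ : PathAlgQ k) (E 1) = R p.succ := by fin_cases p <;> simp [RE, asrc]
    have h₂ : M (E 1 : PathAlgQ k) (R 0) = R 0 := by simp [ER, atgt]
    have h₃ : asrc p.succ = 1 ∧ atgt p.succ = ptgt p := by fin_cases p <;> decide
    have h₄ : asrc 0 = 0 ∧ atgt 0 = 1 := by decide
    rw [← RR_succ, M_assoc, hR, hR, h₃.1, h₃.2, h₄.1, h₄.2, map_add, M_assoc,
      ← M_assoc (R p.succ) (E 1), h₁, ← M_assoc (E 1) (R 0), h₂, add_assoc]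
  let T : PathAlgQ k →ₗ[k] PathAlgQ k := D.comp (M.flip b) - M.flip (D b)
    - Dsum (fun x y z => M x (F y (M z b)))
  have key : T = 0 := by
    apply lin_ext <;> intro i
    · simp [T, hE]
    · simp [T, hR]
    · simp [T, hP]
  have := congrArg (fun L => L a) key
  simp only [T, LinearMap.sub_apply, LinearMap.comp_apply, LinearMap.flip_apply,
    LinearMap.zero_apply, sub_sub, sub_eq_zero] at this
  exact this

lemma Dsum_smul (c : k) (Φ : PathAlgQ k → PathAlgQ k → PathAlgQ k → PathAlgQ k)
    (a : PathAlgQ k) : Dsum (fun x y z => c • Φ x y z) a = c • Dsum Φ a := by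
  simp only [Dsum_apply, smul_add, Finset.smul_sum, smul_comm _ c]

/-! ### The Hochschild coboundary, first argument split off -/

open Matrix (vecCons)

/-- The Hochschild coboundary without its first term; it does not use the left module structure
of the coefficients, so it commutes with left multiplications (`rho_M`). -/
def rho {l : ℕ} (f : (Fin l → PathAlgQ k) → PathAlgQ k) (w : Fin (l + 1) → PathAlgQ k) :
    PathAlgQ k :=
  (∑ i : Fin l, ((-1 : ℤ) ^ (i.1 + 1)) • f (mergeWith mulQ w i)) +
    ((-1 : ℤ) ^ (l + 1)) • M (f (Fin.init w)) (w (Fin.last l))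

lemma hoch_eq {l : ℕ} (f : (Fin l → PathAlgQ k) → PathAlgQ k) (v : Fin (l + 1) → PathAlgQ k) :
    hochδ' mulQ f v = M (v 0) (f (Fin.tail v)) + rho f v := by
  simp only [hochδ', rho, mulQ_eq, add_assoc]

lemma merge_zero {l : ℕ} (x : PathAlgQ k) (w : Fin (l + 1) → PathAlgQ k) :
    mergeWith mulQ (vecCons x w) (0 : Fin (l + 1)) = vecCons (M x (w 0)) (Fin.tail w) := by
  funext s
  cases s using Fin.cases with
  | zero => simp [mergeWith, mulQ_eq]
  | succ s => simp [mergeWith, Fin.tail]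

lemma merge_succ {l : ℕ} (x : PathAlgQ k) (w : Fin (l + 1) → PathAlgQ k) (i : Fin l) :
    mergeWith mulQ (vecCons x w) i.succ = vecCons x (mergeWith mulQ w i) := by
  funext s
  cases s using Fin.cases with
  | zero => simp [mergeWith]
  | succ s => simp [mergeWith]

lemma init_cons {T : Type*} {l : ℕ} (x : T) (w : Fin (l + 1) → T) :
    Fin.init (vecCons x w) = vecCons x (Fin.init w) := by
  funext s
  cases s using Fin.cases with
  | zero => rfl
  | succ s => simp [Fin.init]

/-- Splitting off the first argument, the coboundary without its first term reproduces itself up to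
sign, apart from the term that multiplies the first two arguments. -/
lemma rho_cons {l : ℕ} (f : (Fin (l + 1) → PathAlgQ k) → PathAlgQ k) (x : PathAlgQ k)
    (w : Fin (l + 1) → PathAlgQ k) :
    rho f (vecCons x w) =
      - f (vecCons (M x (w 0)) (Fin.tail w)) - rho (fun u => f (vecCons x u)) w := by
  have h : vecCons x w (Fin.last (l + 1)) = w (Fin.last l) := by
    rw [← Fin.succ_last, Matrix.cons_val_succ]
  simp only [rho, Fin.sum_univ_succ, merge_zero, merge_succ, init_cons, h, Fin.val_zero,
    Fin.val_succ, pow_succ, mul_neg, mul_one, neg_neg, neg_smul, pow_zero, one_smul,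
    Finset.sum_neg_distrib]
  abel

lemma rho_add {l : ℕ} (f g : (Fin l → PathAlgQ k) → PathAlgQ k) (w) :
    rho (fun u => f u + g u) w = rho f w + rho g w := by
  simp only [rho, smul_add, Finset.sum_add_distrib, map_add, LinearMap.add_apply]; abel

lemma rho_M {l : ℕ} (x : PathAlgQ k) (f : (Fin l → PathAlgQ k) → PathAlgQ k) (w) :
    rho (fun u => M x (f u)) w = M x (rho f w) := by
  simp only [rho, map_add, map_sum, map_zsmul, M_assoc]

lemma rho_smul {l : ℕ} (c : k) (f : (Fin l → PathAlgQ k) → PathAlgQ k) (w) :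
    rho (fun u => c • f u) w = c • rho f w := by
  simp only [rho, map_smul, LinearMap.smul_apply, smul_add, Finset.smul_sum, smul_comm _ c]

lemma rho_neg {l : ℕ} (f : (Fin l → PathAlgQ k) → PathAlgQ k) (w) :
    rho (fun u => - f u) w = - rho f w := by
  simp only [rho, map_neg, LinearMap.neg_apply, smul_neg, Finset.sum_neg_distrib, neg_add]

lemma rho_sum {l : ℕ} {ι : Type*} [Fintype ι] (f : ι → (Fin l → PathAlgQ k) → PathAlgQ k) (w) :
    rho (fun u => ∑ i, f i u) w = ∑ i, rho (f i) w := by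
  simp only [rho, Finset.smul_sum, map_sum, LinearMap.sum_apply, Finset.sum_add_distrib]
  rw [Finset.sum_comm]

lemma rho_Dsum {l : ℕ}
    (Φ : PathAlgQ k → PathAlgQ k → PathAlgQ k → (Fin l → PathAlgQ k) → PathAlgQ k)
    (a : PathAlgQ k) (w) :
    rho (fun u => Dsum (fun x y z => Φ x y z u) a) w = Dsum (fun x y z => rho (Φ x y z) w) a := by
  simp only [Dsum_apply, rho_add, rho_sum, rho_smul]

lemma cons_eta {T : Type*} {l : ℕ} (v : Fin (l + 1) → T) : vecCons (v 0) (Fin.tail v) = v :=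
  Fin.cons_self_tail v

lemma update_cons_zero {T : Type*} {l : ℕ} (x y : T) (w : Fin l → T) :
    Function.update (vecCons x w) 0 y = vecCons y w :=
  Fin.update_cons_zero (α := fun _ => T) x w y

lemma update_cons_succ {T : Type*} {l : ℕ} (x y : T) (w : Fin l → T) (i : Fin l) :
    Function.update (vecCons x w) i.succ y = vecCons x (Function.update w i y) :=
  (Fin.cons_update (α := fun _ => T) x w i y).symm

/-- A multilinear cochain as a linear function of its first argument. -/
def head {l : ℕ} (f : (Fin (l + 1) → PathAlgQ k) → PathAlgQ k) (hf : IsMultilinear k f)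
    (w : Fin l → PathAlgQ k) : PathAlgQ k →ₗ[k] PathAlgQ k where
  toFun x := f (vecCons x w)
  map_add' x y := by simpa only [update_cons_zero] using hf.1 (vecCons 0 w) 0 x y
  map_smul' c x := by
    simpa only [update_cons_zero, RingHom.id_apply] using hf.2 (vecCons 0 w) 0 c x

lemma multilinear_cons {l : ℕ} {f : (Fin (l + 1) → PathAlgQ k) → PathAlgQ k}
    (hf : IsMultilinear k f) (x : PathAlgQ k) : IsMultilinear k (fun w => f (vecCons x w)) :=
  ⟨fun v i y z => by simpa only [update_cons_succ] using hf.1 (vecCons x v) i.succ y z,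
    fun v i c z => by simpa only [update_cons_succ] using hf.2 (vecCons x v) i.succ c z⟩

/-- A multilinear cochain as a bilinear function of its first two arguments. -/
def head₂ {l : ℕ} (f : (Fin (l + 2) → PathAlgQ k) → PathAlgQ k) (hf : IsMultilinear k f)
    (w : Fin l → PathAlgQ k) : PathAlgQ k →ₗ[k] PathAlgQ k →ₗ[k] PathAlgQ k :=
  LinearMap.mk₂ k (fun x y => f (vecCons x (vecCons y w)))
    (fun x y z => (head f hf (vecCons z w)).map_add x y)
    (fun c x z => (head f hf (vecCons z w)).map_smul c x)
    (fun x y z => (head _ (multilinear_cons hf x) w).map_add y z)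
    (fun c x z => (head _ (multilinear_cons hf x) w).map_smul c z)

lemma head₂_apply {l : ℕ} (f : (Fin (l + 2) → PathAlgQ k) → PathAlgQ k)
    (hf : IsMultilinear k f) (w : Fin l → PathAlgQ k) (x y : PathAlgQ k) :
    head₂ f hf w x y = f (vecCons x (vecCons y w)) := rfl

/-! ### The contracting homotopy in degrees at least two -/

/-- The contracting homotopy in degrees at least two:
`a₁ ⊗ a₂ ⊗ ⋯` goes to `σ(a₁) ⊗ a₂ ⊗ ⋯`, where `σ a = ∑ᵢ eᵢ ⊗ eᵢ ⊗ a - D a`. -/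
def homotopy {m : ℕ} (f : (Fin (m + 2) → PathAlgQ k) → PathAlgQ k)
    (v : Fin (m + 1) → PathAlgQ k) : PathAlgQ k :=
  ∑ i, M (E i) (f (vecCons (E i) v)) -
    Dsum (fun x y z => M x (f (vecCons y (vecCons z (Fin.tail v))))) (v 0)

lemma homotopy_cons {m : ℕ} (f : (Fin (m + 2) → PathAlgQ k) → PathAlgQ k) (a : PathAlgQ k)
    (w : Fin m → PathAlgQ k) :
    homotopy f (vecCons a w) = ∑ i, M (E i) (f (vecCons (E i) (vecCons a w))) -
      Dsum (fun x y z => M x (f (vecCons y (vecCons z w)))) a := rfl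

lemma multilinear_homotopy {m : ℕ} (f : (Fin (m + 2) → PathAlgQ k) → PathAlgQ k)
    (hf : IsMultilinear k f) : IsMultilinear k (homotopy f) := by
  have h₁ (i : Fin 4) := multilinear_cons hf (E i)
  have h₂ (y z : PathAlgQ k) := multilinear_cons (multilinear_cons hf y) z
  constructor
  · intro v i x y
    obtain ⟨a, w, rfl⟩ : ∃ a w, v = vecCons a w := ⟨_, _, (cons_eta v).symm⟩
    have h₁' (j : Fin 4) := (h₁ j).1 (vecCons a w) i x y
    cases i using Fin.cases with
    | zero =>
      simp only [update_cons_zero, homotopy_cons, map_add] at h₁' ⊢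
      simp only [h₁', map_add, Finset.sum_add_distrib]
      abel
    | succ i =>
      simp only [update_cons_succ, homotopy_cons] at h₁' ⊢
      simp only [h₁', (h₂ _ _).1 w i x y, map_add, Finset.sum_add_distrib, Dsum_add]
      abel
  · intro v i c x
    obtain ⟨a, w, rfl⟩ : ∃ a w, v = vecCons a w := ⟨_, _, (cons_eta v).symm⟩
    have h₁' (j : Fin 4) := (h₁ j).2 (vecCons a w) i c x
    cases i using Fin.cases with
    | zero =>
      simp only [update_cons_zero, homotopy_cons, map_smul] at h₁' ⊢
      simp only [h₁', map_smul, Finset.smul_sum, smul_sub]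
    | succ i =>
      simp only [update_cons_succ, homotopy_cons] at h₁' ⊢
      simp only [h₁', (h₂ _ _).2 w i c x, map_smul, Finset.smul_sum, Dsum_smul, smul_sub]

/-- The cocycle identity of `f`, solved for the part in which the first two arguments of `f` are
left alone. -/
lemma rho_of_cocycle {m : ℕ} {f : (Fin (m + 2) → PathAlgQ k) → PathAlgQ k}
    (hf : hochδ' mulQ f = 0) (x y b : PathAlgQ k) (w : Fin m → PathAlgQ k) :
    rho (fun u => f (vecCons x (vecCons y u))) (vecCons b w) =
      - M x (f (vecCons y (vecCons b w))) + f (vecCons (M x y) (vecCons b w))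
        - f (vecCons x (vecCons (M y b) w)) := by
  have h := congrFun hf (vecCons x (vecCons y (vecCons b w)))
  rw [hoch_eq, rho_cons, rho_cons] at h
  change M x (f (vecCons y (vecCons b w))) + (-f (vecCons (M x y) (vecCons b w)) -
    (-f (vecCons x (vecCons (M y b) w)) -
      rho (fun u => f (vecCons x (vecCons y u))) (vecCons b w))) = 0 at h
  rw [← sub_eq_zero, ← h]
  abel

/-- The relation `f = δ (homotopy f)`: the terms of `δ (homotopy f)` that leave the first two factors
alone are eliminated with the cocycle identity; the rest cancels because `D` is a derivation
(`Dsum_mul`) whose outer faces telescope (`telescope`). -/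
lemma delta_homotopy {m : ℕ} (f : (Fin (m + 2) → PathAlgQ k) → PathAlgQ k)
    (hf : IsMultilinear k f) (h0 : hochδ' mulQ f = 0) : f = hochδ' mulQ (homotopy f) := by
  funext v
  obtain ⟨a, b, w, rfl⟩ : ∃ a b w, v = vecCons a (vecCons b w) :=
    ⟨v 0, Fin.tail v 0, Fin.tail (Fin.tail v), by rw [cons_eta, cons_eta]⟩
  rw [hoch_eq, rho_cons]
  change _ = M a (homotopy f (vecCons b w)) + (- homotopy f (vecCons (M a b) w) -
    rho (fun u => homotopy f (vecCons a u)) (vecCons b w))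
  simp only [homotopy_cons, sub_eq_add_neg, rho_add, rho_neg, rho_sum, rho_Dsum, rho_M,
    rho_of_cocycle h0]
  have hT := telescope ((head₂ f hf w).flip b) a
  have hD := Dsum_mul (head₂ f hf w) a b
  have hs := sum_E_mul (f (vecCons a (vecCons b w)))
  have hid (i : Fin 4) : M (E i : PathAlgQ k) (E i) = E i := by simp [EE]
  simp only [head₂_apply, LinearMap.flip_apply] at hT hD
  simp only [map_add, map_neg, map_sum, Dsum_add, Dsum_neg, Finset.sum_add_distrib,
    Finset.sum_neg_distrib, neg_add, neg_neg, ← M_assoc, hid] at hT hD ⊢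
  rw [hD, ← hT, hs]
  abel

/-! ### Derivations and the centre -/

/-- A linear endomorphism of the path algebra that satisfies the Leibniz rule. -/
def IsDer (g : PathAlgQ k →ₗ[k] PathAlgQ k) : Prop :=
  ∀ x y, g (M x y) = M x (g y) + M (g x) y

/-- The inner derivation `x ↦ x z - z x`. -/
def inn (z : PathAlgQ k) : PathAlgQ k →ₗ[k] PathAlgQ k := M.flip z - M z

lemma inn_apply (z x : PathAlgQ k) : inn z x = M x z - M z x := rfl

lemma isDer_inn (z : PathAlgQ k) : IsDer (inn z) := by
  intro x y
  simp only [inn_apply, map_sub, LinearMap.sub_apply, M_assoc]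
  abel

lemma IsDer.sub {g h : PathAlgQ k →ₗ[k] PathAlgQ k} (hg : IsDer g) (hh : IsDer h) :
    IsDer (g - h) := by
  intro x y
  simp only [LinearMap.sub_apply, hg x y, hh x y, map_sub]
  abel

lemma IsDer.smul {g : PathAlgQ k →ₗ[k] PathAlgQ k} (hg : IsDer g) (c : k) :
    IsDer (c • g) := by
  intro x y
  simp only [LinearMap.smul_apply, hg x y, map_smul, smul_add]

lemma IsDer.sum {ι : Type*} [Fintype ι] {g : ι → PathAlgQ k →ₗ[k] PathAlgQ k}
    (hg : ∀ i, IsDer (g i)) : IsDer (∑ i, g i) := by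
  intro x y
  simp only [LinearMap.sum_apply, hg _ x y, map_sum, Finset.sum_add_distrib]

/-- A derivation is determined by its values on trivial paths and arrows, since these generate the path algebra. -/
lemma IsDer.eq_zero {g : PathAlgQ k →ₗ[k] PathAlgQ k} (hg : IsDer g)
    (hE : ∀ i, g (E i) = 0) (hR : ∀ j, g (R j) = 0) : g = 0 := by
  apply lin_ext
  · simpa using hE
  · simpa using hR
  · intro p
    rw [← RR_succ, hg, hR, hR]
    simp

/-- The derivation that sends the arrow `s.succ` to the arrow `t.succ` and kills the other arrows
and the trivial paths. -/
def U (s t : Fin 4) : PathAlgQ k →ₗ[k] PathAlgQ k where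
  toFun x := x.2.1 s.succ • R t.succ + x.2.2 s • P t
  map_add' x y := by simp only [Prod.fst_add, Prod.snd_add, Pi.add_apply, add_smul]; abel
  map_smul' c x := by
    simp only [Prod.smul_fst, Prod.smul_snd, Pi.smul_apply, smul_eq_mul, mul_smul, smul_add,
      RingHom.id_apply]

lemma U_apply (s t : Fin 4) (x : PathAlgQ k) :
    U s t x = x.2.1 s.succ • R t.succ + x.2.2 s • P t := rfl

lemma U_E (s t i : Fin 4) : U s t (E i : PathAlgQ k) = 0 := by simp [U_apply, E]

lemma U_R (s t : Fin 4) (j : Fin 5) :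
    U s t (R j : PathAlgQ k) = if s.succ = j then R t.succ else 0 := by
  simp [U_apply, R, Pi.single_apply]

lemma isDer_U {s t : Fin 4} (h : ptgt s = ptgt t) : IsDer (U s t : PathAlgQ k →ₗ[k] _) := by
  have hs (p : Fin 4) : atgt p.succ = ptgt p ∧ asrc p.succ = 1 := by fin_cases p <;> decide
  have hM (x y : PathAlgQ k) : (M x y).2.1 s.succ =
      x.1 (ptgt s) * y.2.1 s.succ + x.2.1 s.succ * y.1 1 := by
    rw [← (hs s).1, ← (hs s).2]; rfl
  have hM' (x y : PathAlgQ k) : (M x y).2.2 s = x.1 (ptgt s) * y.2.2 s + x.2.2 s * y.1 0 +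
      x.2.1 s.succ * y.2.1 0 := rfl
  intro x y
  have hRR (j : Fin 5) : M (R t.succ : PathAlgQ k) (R j) = if j = 0 then P t else 0 := by
    fin_cases t <;> simp [RR]
  have e₁ : M x (R t.succ) = x.1 (ptgt s) • R t.succ := by
    conv_lhs => rw [decomp x]
    simp [ER, RR, PR, (hs t).1, h]
  have e₂ : M x (P t) = x.1 (ptgt s) • P t := by
    conv_lhs => rw [decomp x]
    simp [EP, RP, PP, h]
  have e₃ : M (R t.succ) y = y.1 1 • R t.succ + y.2.1 0 • P t := by
    conv_lhs => rw [decomp y]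
    simp [RE, RP, hRR, (hs t).2]
  have e₄ : M (P t) y = y.1 0 • P t := by
    conv_lhs => rw [decomp y]
    simp [PE, PR, PP]
  simp only [U_apply, hM, hM', map_add, map_smul, LinearMap.add_apply, LinearMap.smul_apply,
    e₁, e₂, e₃, e₄]
  module

/-- Sources of the six matrix units that span the outer derivations (numbered without the
arrow `0`). -/
def us : Fin 6 → Fin 4 := ![0, 0, 1, 2, 2, 3]

/-- Targets of the six matrix units that span the outer derivations (numbered without the
arrow `0`). -/
def ut : Fin 6 → Fin 4 := ![0, 1, 0, 2, 3, 2]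

/-- Every derivation differs from an inner one by a derivation that kills the trivial paths. -/
lemma normalize {g : PathAlgQ k →ₗ[k] PathAlgQ k} (hg : IsDer g) (j : Fin 4) :
    (g - inn (∑ i, M (E i) (g (E i)))) (E j) = 0 := by
  have h₁ : M (E j) (∑ i, M (E i) (g (E i))) = M (E j) (g (E j)) := by
    simp [← M_assoc, EE, apply_ite M, DFunLike.ite_apply]
  have h₂ : M (∑ i, M (E i) (g (E i))) (E j) = M (E j) (g (E j)) - g (E j) := by
    have (i : Fin 4) : M (M (E i) (g (E i))) (E j) =
        (if i = j then M (E j) (g (E j)) else 0) - M (E i) (g (E j)) := by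
      have := hg (E i) (E j)
      rw [M_assoc, ← sub_eq_iff_eq_add'.2 this, map_sub, ← M_assoc (E i) (E i)]
      by_cases h : i = j
      · subst h; simp [EE]
      · simp [EE, h]
    simp only [map_sum, LinearMap.sum_apply, this, Finset.sum_sub_distrib, sum_E_mul]
    simp
  rw [LinearMap.sub_apply, inn_apply, h₁, h₂]
  abel

/-- Modulo inner derivations a derivation `g'` kills the trivial paths, hence maps each arrow to a
combination of the arrows parallel to it. Commutators with `e_a`, `e_c`, `e_d` then remove the
diagonal entries of `g'` at the arrows `0`, `2`, `4`, and the six matrix units remain. -/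
lemma classify {g : PathAlgQ k →ₗ[k] PathAlgQ k} (hg : IsDer g) :
    ∃ (c : Fin 6 → k) (z : PathAlgQ k), g = ∑ i, c i • U (us i) (ut i) + inn z := by
  set z₀ := ∑ i, M (E i) (g (E i)) with hz
  set g' := g - inn z₀ with hg'
  have hd : IsDer g' := hg.sub (isDer_inn _)
  have hE : ∀ i, g' (E i) = 0 := normalize hg
  -- `g'` keeps the source and target of an arrow, because it kills the trivial paths
  have hl (j : Fin 5) : g' (R j) = M (M (E (atgt j)) (g' (R j))) (E (asrc j)) := by
    have h₁ : g' (R j) = M (E (atgt j)) (g' (R j)) := by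
      simpa [ER, hE] using hd (E (atgt j)) (R j)
    have h₂ : g' (R j) = M (g' (R j)) (E (asrc j)) := by
      simpa [RE, hE] using hd (R j) (E (asrc j))
    rw [← h₁, ← h₂]
  -- matrix entries of `g'` on the arrows
  let r (i j : Fin 5) : k := (g' (R i)).2.1 j
  let c : Fin 6 → k := ![r 1 1 - r 2 2, r 1 2, r 2 1, r 3 3 - r 4 4, r 3 4, r 4 3]
  let z₁ : PathAlgQ k := r 0 0 • E 0 - r 2 2 • E 2 - r 4 4 • E 3
  refine ⟨c, z₀ + z₁, ?_⟩
  have key : g' - ∑ i, c i • U (us i) (ut i) - inn z₁ = 0 := by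
    apply IsDer.eq_zero
    · refine (hd.sub (IsDer.sum fun i => IsDer.smul (isDer_U ?_) _)).sub (isDer_inn _)
      fin_cases i <;> rfl
    · intro i
      simp only [LinearMap.sub_apply, hE, LinearMap.sum_apply, LinearMap.smul_apply, U_E,
        inn_apply, z₁]
      fin_cases i <;> simp [EE]
    · intro j
      have hj := hl j
      rw [decomp (g' (R j))] at hj
      rw [LinearMap.sub_apply, LinearMap.sub_apply, decomp (g' (R j)), hj]
      change M (M _ (_ + ∑ i, r j i • R i + _)) _ - _ - _ = 0
      fin_cases j <;>
        simp [Fin.sum_univ_succ, U_R, inn_apply, z₁, c, us, ut, ER, RE, EE, EP, PE, atgt, asrc, ptgt] <;>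
        module
  have hi : inn (z₀ + z₁) = inn z₀ + inn z₁ := by
    refine LinearMap.ext fun x => ?_
    simp only [inn_apply, map_add, LinearMap.add_apply]
    abel
  rw [hi]
  rw [sub_sub, sub_eq_zero, hg', sub_eq_iff_eq_add] at key
  rw [key]
  abel

/-- Read off in the arrow coordinates: an inner derivation is diagonal on the arrows, with equal
entries at two parallel arrows, since these have the same source and target. -/
lemma independent {c : Fin 6 → k} {z : PathAlgQ k}
    (h : ∑ i, c i • U (us i) (ut i) = inn z) : c = 0 := by
  have h' (j i : Fin 5) := congrArg (fun L : PathAlgQ k →ₗ[k] PathAlgQ k => (L (R j)).2.1 i) h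
  have h11 := h' 1 1
  have h12 := h' 1 2
  have h21 := h' 2 1
  have h22 := h' 2 2
  have h33 := h' 3 3
  have h34 := h' 3 4
  have h43 := h' 4 3
  have h44 := h' 4 4
  simp [Fin.sum_univ_succ, U_R, us, ut, inn_apply, ← mulQ_eq] at h11 h12 h21 h22 h33 h34 h43 h44
  simp [mulQ, R, atgt, asrc] at h11 h12 h21 h22 h33 h34 h43 h44
  funext i
  fin_cases i <;> simp <;> grind

/-- The centre of the path algebra consists of the multiples of the unit `∑ᵢ eᵢ`. -/
lemma central {z : PathAlgQ k} (h : ∀ x, inn z x = 0) : z = z.1 0 • ∑ i, E i := by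
  have hE (i : Fin 4) := h (E i)
  have hR (j : Fin 5) := h (R j)
  simp only [inn_apply, ← mulQ_eq, mulQ, E, R, Prod.ext_iff, funext_iff] at hE hR
  refine Prod.ext ?_ (Prod.ext ?_ ?_) <;> funext t
  · have h0 := (hR 0).2.1 0
    have h1 := (hR 1).2.1 1
    have h3 := (hR 3).2.1 3
    simp [atgt, asrc] at h0 h1 h3
    fin_cases t <;> simp [E, Fin.sum_univ_succ] <;> grind
  · have h0 := (hE (asrc t)).2.1 t
    fin_cases t <;> simpa [E, Fin.sum_univ_succ, atgt, asrc] using h0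
  · have h0 := (hE 0).2.2 t
    fin_cases t <;> simpa [E, Fin.sum_univ_succ, ptgt] using h0

/-! ### Coboundaries in degrees zero and one -/

lemma delta_zero (h : (Fin 0 → PathAlgQ k) → PathAlgQ k) (v : Fin 1 → PathAlgQ k) :
    hochδ' mulQ h v = inn (h ![]) (v 0) := by
  simp [hochδ', mulQ_eq, inn_apply, Subsingleton.elim _ (![] : Fin 0 → PathAlgQ k), sub_eq_add_neg]

lemma delta_one (f : (Fin 1 → PathAlgQ k) → PathAlgQ k) (g : PathAlgQ k → PathAlgQ k)
    (hfg : ∀ v, f v = g (v 0)) (v : Fin 2 → PathAlgQ k) :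
    hochδ' mulQ f v = M (v 0) (g (v 1)) - g (M (v 0) (v 1)) + M (g (v 0)) (v 1) := by
  simp [hochδ', mulQ_eq, hfg, mergeWith, Fin.tail, Fin.init, sub_eq_add_neg]

lemma multilinear_one (g : PathAlgQ k →ₗ[k] PathAlgQ k) :
    IsMultilinear k (fun v : Fin 1 → PathAlgQ k => g (v 0)) := by
  constructor
  · intro v i x y
    obtain rfl := Subsingleton.elim i 0
    simp
  · intro v i c x
    obtain rfl := Subsingleton.elim i 0
    simp

end QuiverHH

open QuiverHH

/-- for the quiver `Q` with vertices `a, b, c, d`, one arrow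
`a → b`, two arrows `b → c` and two arrows `b → d`, the Hochschild cohomology of
the path algebra `kQ` (= the cohomology of the Hochschild cochain complex of
multilinear maps `(kQ)^{⊗l} → kQ`) satisfies `HH⁰(kQ) ≅ k`, `HH¹(kQ) ≅ k⁶`, and
`HH^l(kQ) = 0` for all `l ≥ 2`. -/
theorem stmt_17 {k : Type*} [Field k] :
    -- `HH⁰(kQ) ≅ k`: the cocycles in degree 0 form a line
    (∃ g₀ : (Fin 0 → PathAlgQ k) → PathAlgQ k,
      IsMultilinear k g₀ ∧ hochδ' mulQ g₀ = 0 ∧ g₀ ≠ 0 ∧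
      ∀ f : (Fin 0 → PathAlgQ k) → PathAlgQ k,
        IsMultilinear k f → hochδ' mulQ f = 0 → ∃ c : k, f = c • g₀) ∧
    -- `HH¹(kQ) ≅ k⁶`
    (∃ G : Fin 6 → ((Fin 1 → PathAlgQ k) → PathAlgQ k),
      (∀ i, IsMultilinear k (G i) ∧ hochδ' mulQ (G i) = 0) ∧
      (∀ f : (Fin 1 → PathAlgQ k) → PathAlgQ k,
        IsMultilinear k f → hochδ' mulQ f = 0 →
        ∃ (c : Fin 6 → k) (h : (Fin 0 → PathAlgQ k) → PathAlgQ k),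
          IsMultilinear k h ∧ f = (∑ i, c i • G i) + hochδ' mulQ h) ∧
      (∀ c : Fin 6 → k,
        (∃ h : (Fin 0 → PathAlgQ k) → PathAlgQ k,
          IsMultilinear k h ∧ (∑ i, c i • G i) = hochδ' mulQ h) → c = 0)) ∧
    -- `HH^l(kQ) = 0` for `l ≥ 2`
    (∀ (m : ℕ) (f : (Fin (m + 2) → PathAlgQ k) → PathAlgQ k),
      IsMultilinear k f → hochδ' mulQ f = 0 →
      ∃ h : (Fin (m + 1) → PathAlgQ k) → PathAlgQ k,
        IsMultilinear k h ∧ f = hochδ' mulQ h) := by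
  refine ⟨⟨fun _ => ∑ i, E i, ⟨fun _ i => i.elim0, fun _ i => i.elim0⟩, ?_, ?_, ?_⟩,
    ⟨fun i v => U (us i) (ut i) (v 0), fun i => ⟨multilinear_one _, ?_⟩, ?_, ?_⟩,
    fun m f hf h0 => ⟨homotopy f, multilinear_homotopy f hf, delta_homotopy f hf h0⟩⟩
  -- degree zero: the unit is central and nonzero, and spans the centre
  · funext v
    rw [delta_zero, inn_apply]
    simp only [map_sum, LinearMap.sum_apply, sum_E_mul, sum_mul_E, sub_self, Pi.zero_apply]
  · intro h
    simpa [E, Prod.fst_sum, Pi.single_apply] using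
      congrArg (fun x : PathAlgQ k => x.1 0) (congrFun h ![])
  · intro f _ h0
    have hz : ∀ x, inn (f ![]) x = 0 := fun x => by
      have h := congrFun h0 ![x]
      rwa [delta_zero] at h
    refine ⟨(f ![]).1 0, funext fun v => ?_⟩
    rw [Subsingleton.elim v ![]]
    exact central hz
  -- degree one: the matrix units are derivations, span the outer ones and are independent
  · funext v
    have hU : IsDer (U (us i) (ut i) : PathAlgQ k →ₗ[k] PathAlgQ k) :=
      isDer_U (by fin_cases i <;> rfl)
    rw [delta_one _ (U (us i) (ut i)) (fun _ => rfl), hU, Pi.zero_apply]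
    abel
  · intro f hf h0
    have hfv (v : Fin 1 → PathAlgQ k) : f v = head f hf ![] (v 0) := by
      change f v = f ![v 0]
      congr 1
      funext i
      rw [Subsingleton.elim i 0]
      rfl
    have hg : IsDer (head f hf ![]) := fun x y => by
      have h := congrFun h0 ![x, y]
      rw [delta_one f _ hfv, Pi.zero_apply, sub_add_eq_add_sub, sub_eq_zero] at h
      exact h.symm
    obtain ⟨c, z, hcz⟩ := classify hg
    refine ⟨c, fun _ => z, ⟨fun _ i => i.elim0, fun _ i => i.elim0⟩, funext fun v => ?_⟩
    rw [hfv, hcz, Pi.add_apply, delta_zero]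
    simp only [LinearMap.add_apply, LinearMap.sum_apply, LinearMap.smul_apply, Finset.sum_apply,
      Pi.smul_apply]
  · rintro c ⟨h, _, hc⟩
    refine independent (z := h ![]) (LinearMap.ext fun x => ?_)
    have hx := congrFun hc ![x]
    rw [delta_zero] at hx
    change _ = inn (h ![]) x at hx
    rw [← hx]
    simp only [LinearMap.sum_apply, LinearMap.smul_apply, Finset.sum_apply,
      Pi.smul_apply]
    rfl
end
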